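/- arXiv:2012.08955 — 5 statements merged into one kernel-verified Lean document; each statement's English description precedes it below -/
import Mathlib

section
/- Let n ≥ 2 and let K ⊂ ℝⁿ be a convex body. Then K is centrally symmetric if and only if K is characterized by its convex hull function up to translations, i.e., if and only if every convex body L ⊂ ℝⁿ with G_L = G_K is a translate of K. -/
open MeasureTheory Set Pointwise Metric

/-- A convex body: a compact convex set with nonempty interior. -/
def IsConvexBody {n : ℕ} (K : Set (EuclideanSpace ℝ (Fin n))) : Prop :=
  IsCompact K ∧ Convex ℝ K ∧ (interior K).Nonempty

/-- The convex hull function `G_K(t) = volₙ(conv(K ∪ (t + K)))`. -/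
noncomputable def convexHullFn {n : ℕ} (K : Set (EuclideanSpace ℝ (Fin n)))
    (t : EuclideanSpace ℝ (Fin n)) : ℝ :=
  (volume (convexHull ℝ (K ∪ (t +ᵥ K)))).toReal

/-!
Since `conv (K ∪ (t + K)) = K + [0, t]`, the function `G_K` records the volumes of the sums
`K + [-z, z]`. For convex `K` their increase over `vol K` is linear in the length of `z`, so it is
the directional derivative of the volume at `K` towards the segment `[-z, z]`, and by telescoping
`G_K` determines the derivatives towards all zonotopes. If `K = -K`, its support function is a
uniform limit of differences of support functions of zonotopes: a Gaussian average of
`(‖x‖² - n) |⟪y + x, v⟫|` over `x` is a Gaussian density in `⟪y, v⟫`, and the Stone–Weierstrass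
theorem yields all even functions on the sphere. Hence, if `G_L = G_K`, the derivative of the volume
at `L` towards `K` is the one at `K` towards `K`, namely `n vol K`. As `vol L = vol K`, this is
equality in Minkowski's first inequality, so `vol (L/2 + K/2) = vol L`, and the equality case of the
Brunn–Minkowski inequality makes `L` a translate of `K`.

The equality case comes from the Prékopa–Leindler inequality. With centroids at the origin, its
first and second order expansions in an exponential tilt bound `∫_L f - ∫_K f` by `0` for every
1-Lipschitz `f`; the distance functions to `K` and `L` then give `L = K`.

Conversely `-K` has the same convex hull function as `K`, so it must be a translate of `K`.
-/

open scoped ENNReal RealInnerProductSpace Topology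
open Filter ProbabilityTheory

theorem volume_add_volume_le_of_isCompact {A B : Set ℝ} (hA : IsCompact A) (hB : IsCompact B)
    (hA₀ : A.Nonempty) (hB₀ : B.Nonempty) : volume A + volume B ≤ volume (A + B) := by
  obtain ⟨a, haA, ha⟩ := hA.exists_isGreatest hA₀
  obtain ⟨b, hbB, hb⟩ := hB.exists_isLeast hB₀
  have hsub : (b +ᵥ A) ∪ (a +ᵥ B) ⊆ A + B := by
    rintro _ (⟨x, hx, rfl⟩ | ⟨y, hy, rfl⟩)
    · exact ⟨x, hx, b, hbB, add_comm x b⟩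
    · exact ⟨a, haA, y, hy, rfl⟩
  have hdisj : AEDisjoint volume (b +ᵥ A) (a +ᵥ B) := by
    refine measure_mono_null (t := {a + b}) ?_ Real.volume_singleton
    rintro _ ⟨⟨x, hx, rfl⟩, ⟨y, hy, hxy⟩⟩
    have := ha hx
    have := hb hy
    simp only [vadd_eq_add, mem_singleton_iff] at hxy ⊢
    linarith
  calc volume A + volume B = volume (b +ᵥ A) + volume (a +ᵥ B) := by simp only [measure_vadd]
    _ = volume ((b +ᵥ A) ∪ (a +ᵥ B)) :=
        (measure_union₀ (hB.vadd a).measurableSet.nullMeasurableSet hdisj).symm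
    _ ≤ volume (A + B) := measure_mono hsub

theorem volume_add_volume_le {A B : Set ℝ} (hA : MeasurableSet A) (hB : MeasurableSet B)
    (hA₀ : A.Nonempty) (hB₀ : B.Nonempty) : volume A + volume B ≤ volume (A + B) := by
  obtain ⟨a, ha⟩ := hA₀
  obtain ⟨b, hb⟩ := hB₀
  rw [hA.measure_eq_iSup_isCompact, hB.measure_eq_iSup_isCompact]
  simp only [iSup_and']
  refine ENNReal.biSup_add_biSup_le' ⟨∅, empty_subset _, isCompact_empty⟩
    ⟨∅, empty_subset _, isCompact_empty⟩ fun C ⟨hCA, hC⟩ D ⟨hDB, hD⟩ => ?_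
  calc volume C + volume D ≤ volume (insert a C) + volume (insert b D) := by
        gcongr <;> exact subset_insert _ _
    _ ≤ volume (insert a C + insert b D) :=
        volume_add_volume_le_of_isCompact (hC.insert a) (hD.insert b)
          (insert_nonempty _ _) (insert_nonempty _ _)
    _ ≤ volume (A + B) := by
        gcongr <;> exact insert_subset ‹_› ‹_›

/-- The Prékopa–Leindler inequality with weights `a` and `b`, as a property of the measured
vector space `E`; as a property it can be passed to products and isomorphic spaces. -/
def PrekopaLeindler (E : Type*) [AddCommGroup E] [Module ℝ E] [MeasureSpace E] (a b : ℝ) : Prop :=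
  ∀ ⦃f g h : E → ℝ≥0∞⦄, Measurable f → Measurable g → Measurable h →
    (∀ x y, f x ^ a * g y ^ b ≤ h (a • x + b • y)) →
    (∫⁻ x, f x) ^ a * (∫⁻ x, g x) ^ b ≤ ∫⁻ x, h x

theorem lintegral_eq_lintegral_meas_ofReal_lt {α : Type*} {_ : MeasurableSpace α} (μ : Measure α)
    {f : α → ℝ≥0∞} (hf : Measurable f) (hf_top : ∀ x, f x ≠ ∞) :
    ∫⁻ x, f x ∂μ = ∫⁻ t in Ioi (0 : ℝ), μ {x | ENNReal.ofReal t < f x} := by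
  have := lintegral_eq_lintegral_meas_lt μ (ae_of_all _ fun x => ENNReal.toReal_nonneg)
    hf.ennreal_toReal.aemeasurable
  simp only [ENNReal.ofReal_toReal (hf_top _)] at this
  rw [this]
  refine setLIntegral_congr_fun measurableSet_Ioi fun t ht => ?_
  congr with x
  exact (ENNReal.ofReal_lt_iff_lt_toReal (le_of_lt ht) (hf_top x)).symm

section Weights

variable {a b : ℝ} (ha : 0 < a) (hb : 0 < b) (hab : a + b = 1)
include ha hb hab

theorem rpow_mul_rpow_le_add (x y : ℝ≥0∞) :
    x ^ a * y ^ b ≤ ENNReal.ofReal a * x + ENNReal.ofReal b * y := by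
  have hpq : (a⁻¹).HolderConjugate b⁻¹ :=
    Real.holderConjugate_iff.2 ⟨(one_lt_inv₀ ha).2 (by linarith), by simpa using hab⟩
  have := ENNReal.young_inequality (x ^ a) (y ^ b) hpq
  rw [ENNReal.rpow_rpow_inv ha.ne', ENNReal.rpow_rpow_inv hb.ne', ENNReal.ofReal_inv_of_pos ha,
    ENNReal.ofReal_inv_of_pos hb, div_eq_mul_inv, div_eq_mul_inv, inv_inv, inv_inv] at this
  simpa only [mul_comm] using this

theorem lt_rpow_mul_rpow {s x y : ℝ≥0∞} (hx : s < x) (hy : s < y) :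
    s < x ^ a * y ^ b := by
  calc s = s ^ a * s ^ b := by
        rw [← ENNReal.rpow_add_of_nonneg _ _ ha.le hb.le, hab, ENNReal.rpow_one]
    _ < x ^ a * y ^ b :=
        ENNReal.mul_lt_mul (ENNReal.rpow_lt_rpow hx ha) (ENNReal.rpow_lt_rpow hy hb)

theorem add_lintegral_le_of_iSup_eq_one {f g h : ℝ → ℝ≥0∞} (hf : Measurable f)
    (hg : Measurable g) (hh : Measurable h) (hf₁ : ⨆ x, f x = 1) (hg₁ : ⨆ x, g x = 1)
    (H : ∀ x y, f x ^ a * g y ^ b ≤ h (a • x + b • y)) :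
    ENNReal.ofReal a * (∫⁻ x, f x) + ENNReal.ofReal b * ∫⁻ x, g x ≤ ∫⁻ x, h x := by
  have hf_le (x) : f x ≤ 1 := hf₁ ▸ le_iSup f x
  have hg_le (x) : g x ≤ 1 := hg₁ ▸ le_iSup g x
  have meas {u : ℝ → ℝ≥0∞} (hu : Measurable u) (c : ℝ≥0∞) : MeasurableSet {x | c < u x} :=
    measurableSet_lt measurable_const hu
  have meas_vol (u : ℝ → ℝ≥0∞) : Measurable fun t : ℝ => volume {x | ENNReal.ofReal t < u x} :=
    Antitone.measurable fun s t hst =>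
      measure_mono fun x hx => (ENNReal.ofReal_le_ofReal hst).trans_lt hx
  calc ENNReal.ofReal a * (∫⁻ x, f x) + ENNReal.ofReal b * ∫⁻ x, g x
    _ = ∫⁻ t in Ioi (0 : ℝ), (ENNReal.ofReal a * volume {x | ENNReal.ofReal t < f x} +
          ENNReal.ofReal b * volume {x | ENNReal.ofReal t < g x}) := by
        rw [lintegral_eq_lintegral_meas_ofReal_lt volume hf fun x =>
            ne_top_of_le_ne_top ENNReal.one_ne_top (hf_le x),
          lintegral_eq_lintegral_meas_ofReal_lt volume hg fun x =>
            ne_top_of_le_ne_top ENNReal.one_ne_top (hg_le x),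
          ← lintegral_const_mul _ (meas_vol f), ← lintegral_const_mul _ (meas_vol g),
          ← lintegral_add_left ((meas_vol f).const_mul _)]
    _ ≤ ∫⁻ t in Ioi (0 : ℝ), volume {x | ENNReal.ofReal t < min (h x) 1} := by
        refine setLIntegral_mono' measurableSet_Ioi fun t _ => ?_
        rcases le_or_gt 1 (ENNReal.ofReal t) with ht | ht
        · simp [((hf_le _).trans ht).not_gt, ((hg_le _).trans ht).not_gt]
        · obtain ⟨x, hx⟩ := lt_iSup_iff.1 (hf₁.symm ▸ ht)
          obtain ⟨y, hy⟩ := lt_iSup_iff.1 (hg₁.symm ▸ ht)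
          have hsub : a • {x | ENNReal.ofReal t < f x} + b • {x | ENNReal.ofReal t < g x} ⊆
              {x | ENNReal.ofReal t < min (h x) 1} := by
            rintro _ ⟨_, ⟨x, hx, rfl⟩, _, ⟨y, hy, rfl⟩, rfl⟩
            exact lt_min ((lt_rpow_mul_rpow ha hb hab hx hy).trans_le (H x y)) ht
          refine le_trans ?_ (measure_mono hsub)
          have := volume_add_volume_le ((meas hf (.ofReal t)).const_smul₀ a)
            ((meas hg (.ofReal t)).const_smul₀ b) ⟨_, smul_mem_smul_set hx⟩
            ⟨_, smul_mem_smul_set hy⟩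
          simpa [Measure.addHaar_smul, abs_of_pos ha, abs_of_pos hb] using this
    _ = ∫⁻ x, min (h x) 1 := (lintegral_eq_lintegral_meas_ofReal_lt _ (hh.min measurable_const)
          fun x => ne_top_of_le_ne_top ENNReal.one_ne_top (min_le_right _ _)).symm
    _ ≤ ∫⁻ x, h x := lintegral_mono fun x => min_le_left _ _

theorem rpow_lintegral_mul_le_of_iSup_ne_top {f g h : ℝ → ℝ≥0∞} (hf : Measurable f)
    (hg : Measurable g) (hh : Measurable h) (hf_top : ⨆ x, f x ≠ ∞) (hg_top : ⨆ x, g x ≠ ∞)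
    (H : ∀ x y, f x ^ a * g y ^ b ≤ h (a • x + b • y)) :
    (∫⁻ x, f x) ^ a * (∫⁻ x, g x) ^ b ≤ ∫⁻ x, h x := by
  set s := ⨆ x, f x
  set t := ⨆ x, g x
  rcases eq_or_ne s 0 with hs | hs
  · simp [ENNReal.iSup_eq_zero.1 hs, ha]
  rcases eq_or_ne t 0 with ht | ht
  · simp [ENNReal.iSup_eq_zero.1 ht, hb]
  have hst : (s ^ a * t ^ b)⁻¹ ≠ ∞ := by simp [*]
  have rpow_scale (x y : ℝ≥0∞) :
      (s⁻¹ * x) ^ a * (t⁻¹ * y) ^ b = (s ^ a * t ^ b)⁻¹ * (x ^ a * y ^ b) := by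
    rw [ENNReal.mul_inv (.inr (by simp [*])) (.inl (by simp [*])),
      ENNReal.mul_rpow_of_nonneg _ _ ha.le, ENNReal.mul_rpow_of_nonneg _ _ hb.le,
      ENNReal.inv_rpow, ENNReal.inv_rpow]
    ring
  have scaled : (s ^ a * t ^ b)⁻¹ * ((∫⁻ x, f x) ^ a * (∫⁻ x, g x) ^ b) ≤
      (s ^ a * t ^ b)⁻¹ * ∫⁻ x, h x := by
    rw [← rpow_scale]
    refine (rpow_mul_rpow_le_add ha hb hab _ _).trans ?_
    simp only [← lintegral_const_mul' _ _ (ENNReal.inv_ne_top.2 hs),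
      ← lintegral_const_mul' _ _ (ENNReal.inv_ne_top.2 ht), ← lintegral_const_mul' _ _ hst]
    refine add_lintegral_le_of_iSup_eq_one ha hb hab (hf.const_mul s⁻¹) (hg.const_mul t⁻¹)
      (hh.const_mul (s ^ a * t ^ b)⁻¹) ?_ ?_ fun x y => ?_
    · rw [← ENNReal.mul_iSup, ENNReal.inv_mul_cancel hs hf_top]
    · rw [← ENNReal.mul_iSup, ENNReal.inv_mul_cancel ht hg_top]
    · rw [rpow_scale]
      gcongr
      exact H x y
  refine (ENNReal.mul_le_mul_iff_right ?_ ?_).1 scaled <;> simp [*, ENNReal.mul_eq_top]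

theorem prekopaLeindler_real : PrekopaLeindler ℝ a b := by
  intro f g h hf hg hh H
  have tendsto_truncation {u : ℝ → ℝ≥0∞} (hu : Measurable u) (c : ℝ) :
      Tendsto (fun N : ℕ => (∫⁻ x, min (u x) N) ^ c) atTop (𝓝 ((∫⁻ x, u x) ^ c)) := by
    refine (ENNReal.continuous_rpow_const.tendsto _).comp <|
      lintegral_tendsto_of_tendsto_of_monotone (fun N => (hu.min measurable_const).aemeasurable)
      (ae_of_all _ fun x N M hNM => by dsimp only; gcongr) (ae_of_all _ fun x => ?_)
    simpa using (tendsto_const_nhds (x := u x)).min ENNReal.tendsto_nat_nhds_top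
  refine ENNReal.mul_le_of_forall_lt fun c hc d hd => ?_
  obtain ⟨N, hcN, hdN⟩ := (((tendsto_truncation hf a).eventually (eventually_gt_nhds hc)).and
    ((tendsto_truncation hg b).eventually (eventually_gt_nhds hd))).exists
  refine (mul_le_mul' hcN.le hdN.le).trans ?_
  have iSup_ne_top (u : ℝ → ℝ≥0∞) : ⨆ x, min (u x) (N : ℝ≥0∞) ≠ ∞ :=
    ne_top_of_le_ne_top (ENNReal.natCast_ne_top N) (iSup_le fun x => min_le_right _ _)
  refine rpow_lintegral_mul_le_of_iSup_ne_top ha hb hab (hf.min measurable_const)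
    (hg.min measurable_const) hh (iSup_ne_top f) (iSup_ne_top g) fun x y => (H x y).trans' ?_
  gcongr <;> exact min_le_left _ _

end Weights

section Transfer

variable {X Y : Type*} [AddCommGroup X] [Module ℝ X] [MeasureSpace X] [AddCommGroup Y]
  [Module ℝ Y] [MeasureSpace Y] {a b : ℝ}

theorem PrekopaLeindler.prod [SFinite (volume : Measure Y)] (hX : PrekopaLeindler X a b)
    (hY : PrekopaLeindler Y a b) : PrekopaLeindler (X × Y) a b := by
  intro f g h hf hg hh H
  rw [Measure.volume_eq_prod, lintegral_prod _ hf.aemeasurable, lintegral_prod _ hg.aemeasurable,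
    lintegral_prod _ hh.aemeasurable]
  refine hX hf.lintegral_prod_right' hg.lintegral_prod_right' hh.lintegral_prod_right'
    fun x x' => ?_
  exact hY (hf.comp measurable_prodMk_left) (hg.comp measurable_prodMk_left)
    (hh.comp measurable_prodMk_left) fun y y' => H (x, y) (x', y')

theorem PrekopaLeindler.of_measurePreserving (e : X →ₗ[ℝ] Y)
    (he : MeasurePreserving e volume volume) (hX : PrekopaLeindler X a b) :
    PrekopaLeindler Y a b := by
  intro f g h hf hg hh H
  rw [← he.lintegral_comp hf, ← he.lintegral_comp hg, ← he.lintegral_comp hh]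
  refine hX (hf.comp he.measurable) (hg.comp he.measurable) (hh.comp he.measurable) fun x y => ?_
  simpa only [map_add, map_smul] using H (e x) (e y)

end Transfer

theorem prekopaLeindler_pi {a b : ℝ} (ha : 0 < a) (hb : 0 < b) (hab : a + b = 1) (n : ℕ) :
    PrekopaLeindler (Fin n → ℝ) a b := by
  induction n with
  | zero =>
    intro f g h _ _ _ H
    have hvol : (volume : Measure (Fin 0 → ℝ)) univ = 1 := by simp [volume_pi]
    simp only [lintegral_unique, hvol, mul_one]
    exact (H _ _).trans_eq (congrArg h (Subsingleton.elim _ _))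
  | succ n ih =>
    refine ((prekopaLeindler_real ha hb hab).prod ih).of_measurePreserving
      (Fin.consLinearEquiv ℝ fun _ : Fin (n + 1) => ℝ).toLinearMap ?_
    have coe_eq : ⇑(Fin.consLinearEquiv ℝ fun _ : Fin (n + 1) => ℝ) =
        (MeasurableEquiv.piFinSuccAbove (fun _ : Fin (n + 1) => ℝ) 0).symm := by
      ext p i
      simp [MeasurableEquiv.piFinSuccAbove, Fin.insertNthEquiv]
    have := (volume_preserving_piFinSuccAbove (fun _ : Fin (n + 1) => ℝ) 0).symm
    rw [← coe_eq] at this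
    exact this

section EuclideanVolume

variable {E : Type*} [NormedAddCommGroup E] [InnerProductSpace ℝ E] [FiniteDimensional ℝ E]
  [MeasurableSpace E] [BorelSpace E]

theorem prekopaLeindler {a b : ℝ} (ha : 0 < a) (hb : 0 < b) (hab : a + b = 1) :
    PrekopaLeindler E a b :=
  (prekopaLeindler_pi ha hb hab _).of_measurePreserving
    ((stdOrthonormalBasis ℝ E).repr.symm.toLinearMap ∘ₗ
      (WithLp.linearEquiv 2 ℝ (Fin _ → ℝ)).symm.toLinearMap)
    ((stdOrthonormalBasis ℝ E).measurePreserving_repr_symm.comp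
      (PiLp.volume_preserving_toLp (Fin _)))

variable {K L : Set E}

theorem integral_exp_rpow_mul_le {a b : ℝ} (ha : 0 < a) (hb : 0 < b) (hab : a + b = 1)
    (hL : IsCompact L) (hK : IsCompact K) {p q r : E → ℝ} (hp : Continuous p) (hq : Continuous q)
    (hr : Continuous r) (H : ∀ x ∈ L, ∀ y ∈ K, a * p x + b * r y ≤ q (a • x + b • y)) :
    (∫ x in L, Real.exp (p x)) ^ a * (∫ x in K, Real.exp (r x)) ^ b ≤
      ∫ x in a • L + b • K, Real.exp (q x) := by
  have hM : IsCompact (a • L + b • K) := (hL.smul a).add (hK.smul b)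
  have lintegral_eq {S : Set E} (hS : IsCompact S) {u : E → ℝ} (hu : Continuous u) :
      ∫⁻ x, S.indicator (fun x => ENNReal.ofReal (Real.exp (u x))) x =
        ENNReal.ofReal (∫ x in S, Real.exp (u x)) := by
    rw [lintegral_indicator hS.measurableSet, ofReal_integral_eq_lintegral_ofReal
      (hu.rexp.continuousOn.integrableOn_compact hS) (ae_of_all _ fun x => (Real.exp_pos _).le)]
  have meas {S : Set E} (hS : IsCompact S) {u : E → ℝ} (hu : Continuous u) :
      Measurable (S.indicator fun x => ENNReal.ofReal (Real.exp (u x))) :=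
    hu.rexp.measurable.ennreal_ofReal.indicator hS.measurableSet
  have key := prekopaLeindler (E := E) ha hb hab (meas hL hp) (meas hK hr) (meas hM hq)
    fun x y => ?_
  · rw [lintegral_eq hL hp, lintegral_eq hK hr, lintegral_eq hM hq,
      ENNReal.ofReal_rpow_of_nonneg (by positivity) ha.le,
      ENNReal.ofReal_rpow_of_nonneg (by positivity) hb.le, ← ENNReal.ofReal_mul (by positivity)]
      at key
    exact (ENNReal.ofReal_le_ofReal_iff (by positivity)).1 key
  · by_cases hx : x ∈ L; swap
    · simp [hx, ha]
    by_cases hy : y ∈ K; swap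
    · simp [hy, hb]
    rw [indicator_of_mem hx, indicator_of_mem hy, indicator_of_mem
      (Set.add_mem_add (smul_mem_smul_set hx) (smul_mem_smul_set hy)),
      ENNReal.ofReal_rpow_of_nonneg (by positivity) ha.le,
      ENNReal.ofReal_rpow_of_nonneg (by positivity) hb.le, ← ENNReal.ofReal_mul (by positivity),
      ← Real.exp_mul, ← Real.exp_mul, ← Real.exp_add]
    gcongr
    linarith [H x hx y hy]

theorem volume_rpow_mul_volume_rpow_le {a b : ℝ} (ha : 0 < a) (hb : 0 < b) (hab : a + b = 1)
    (hL : IsCompact L) (hK : IsCompact K) :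
    volume.real L ^ a * volume.real K ^ b ≤ volume.real (a • L + b • K) := by
  simpa using integral_exp_rpow_mul_le ha hb hab hL hK (p := 0) (q := 0) (r := 0)
    continuous_zero continuous_zero continuous_zero

theorem deriv_deriv_nonneg_of_isLocalMin {f : ℝ → ℝ} {x : ℝ} (hf : ContinuousAt f x)
    (h : IsLocalMin f x) : 0 ≤ deriv (deriv f) x := by
  by_contra! hneg
  have hmax := isLocalMax_of_deriv_deriv_neg hneg h.deriv_eq_zero hf
  have hconst : f =ᶠ[𝓝 x] fun _ => f x := by
    filter_upwards [h, hmax] with y hy hy' using le_antisymm hy' hy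
  have : deriv (deriv f) x = 0 := by simp [hconst.deriv.deriv_eq]
  exact hneg.ne this

theorem add_deriv_deriv_le_of_add_le {a b x : ℝ} {f g h : ℝ → ℝ} (hf : ∀ t, AnalyticAt ℝ f t)
    (hg : ∀ t, AnalyticAt ℝ g t) (hh : ∀ t, AnalyticAt ℝ h t) (hx : a * f x + b * g x = h x)
    (H : ∀ t, a * f t + b * g t ≤ h t) :
    a * deriv (deriv f) x + b * deriv (deriv g) x ≤ deriv (deriv h) x := by
  have deriv_combination {u v w : ℝ → ℝ} (hu : ∀ t, AnalyticAt ℝ u t)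
      (hv : ∀ t, AnalyticAt ℝ v t) (hw : ∀ t, AnalyticAt ℝ w t) :
      deriv (fun t => w t - (a * u t + b * v t)) =
        fun t => deriv w t - (a * deriv u t + b * deriv v t) :=
    funext fun t => ((hw t).differentiableAt.hasDerivAt.sub
      (((hu t).differentiableAt.hasDerivAt.const_mul a).add
        ((hv t).differentiableAt.hasDerivAt.const_mul b))).deriv
  have hmin : IsLocalMin (fun t => h t - (a * f t + b * g t)) x :=
    Eventually.of_forall fun t => by simpa only [hx, sub_self] using sub_nonneg.2 (H t)
  have hcont : ContinuousAt (fun t => h t - (a * f t + b * g t)) x :=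
    (hh x).continuousAt.sub
      (((hf x).continuousAt.const_mul a).add ((hg x).continuousAt.const_mul b))
  have hnonneg := deriv_deriv_nonneg_of_isLocalMin hcont hmin
  rw [deriv_combination hf hg hh, deriv_combination (fun t => (hf t).deriv)
    (fun t => (hg t).deriv) fun t => (hh t).deriv] at hnonneg
  exact sub_nonneg.1 hnonneg

theorem nonneg_of_hasDerivAt_of_nonneg {f : ℝ → ℝ} {f' x : ℝ} (hf : HasDerivAt f f' x)
    (h₀ : f x = 0) (h : ∀ y > x, 0 ≤ f y) : 0 ≤ f' := by
  refine ge_of_tendsto hf.tendsto_slope_zero_right ?_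
  filter_upwards [self_mem_nhdsWithin] with t (ht : 0 < t)
  have := h (x + t) (by linarith)
  rw [h₀, sub_zero, smul_eq_mul]
  positivity

theorem integrableExpSet_restrict_of_isCompact {S : Set E} (hS : IsCompact S) {p : E → ℝ}
    (hp : Continuous p) : integrableExpSet p (volume.restrict S) = univ :=
  eq_univ_of_forall fun _ =>
    ((continuous_const.mul hp).rexp.continuousOn.integrableOn_compact hS : IntegrableOn _ _ _)

theorem analyticAt_cgf_restrict {S : Set E} (hS : IsCompact S) {p : E → ℝ} (hp : Continuous p)
    (t : ℝ) : AnalyticAt ℝ (cgf p (volume.restrict S)) t :=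
  analyticAt_cgf (by simp [integrableExpSet_restrict_of_isCompact hS hp])

theorem cgf_restrict_zero (p : E → ℝ) (S : Set E) :
    cgf p (volume.restrict S) 0 = Real.log (volume.real S) := by
  rw [cgf_zero', measureReal_restrict_apply_univ]

theorem deriv_cgf_restrict_zero {S : Set E} (hS : IsCompact S) {p : E → ℝ} (hp : Continuous p) :
    deriv (cgf p (volume.restrict S)) 0 = (∫ x in S, p x) / volume.real S := by
  rw [deriv_cgf_zero (by simp [integrableExpSet_restrict_of_isCompact hS hp]),
    measureReal_restrict_apply_univ]

theorem deriv_deriv_cgf_restrict_zero {S : Set E} (hS : IsCompact S) {p : E → ℝ}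
    (hp : Continuous p) : deriv (deriv (cgf p (volume.restrict S))) 0 =
      (∫ x in S, p x ^ 2) / volume.real S - ((∫ x in S, p x) / volume.real S) ^ 2 := by
  have := iteratedDeriv_two_cgf (X := p) (μ := volume.restrict S) (v := 0)
    (by simp [integrableExpSet_restrict_of_isCompact hS hp])
  simpa [iteratedDeriv_eq_iterate, deriv_cgf_restrict_zero hS hp] using this

theorem mul_norm_sq_add_mul_norm_sq {F : Type*} [NormedAddCommGroup F] [InnerProductSpace ℝ F]
    {a b : ℝ} (hab : a + b = 1) (x y : F) :
    a * ‖x‖ ^ 2 + b * ‖y‖ ^ 2 = ‖a • x + b • y‖ ^ 2 + a * b * ‖x - y‖ ^ 2 := by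
  obtain rfl : b = 1 - a := by linarith
  rw [norm_add_sq_real, norm_sub_sq_real, norm_smul, norm_smul, real_inner_smul_left,
    real_inner_smul_right, mul_pow, mul_pow, Real.norm_eq_abs, Real.norm_eq_abs, sq_abs, sq_abs]
  ring

section BrunnMinkowskiEquality

variable {a b : ℝ} (ha : 0 < a) (hb : 0 < b) (hab : a + b = 1) (hL : IsCompact L)
  (hK : IsCompact K)
include ha hb hab hL hK

theorem cgf_add_cgf_le (hL₀ : 0 < volume.real L) (hK₀ : 0 < volume.real K) {p q r : E → ℝ}
    (hp : Continuous p) (hq : Continuous q) (hr : Continuous r) {t : ℝ}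
    (H : ∀ x ∈ L, ∀ y ∈ K, a * (t * p x) + b * (t * r y) ≤ t * q (a • x + b • y)) :
    a * cgf p (volume.restrict L) t + b * cgf r (volume.restrict K) t ≤
      cgf q (volume.restrict (a • L + b • K)) t := by
  have mgf_pos {S : Set E} (hS : IsCompact S) (hS₀ : 0 < volume.real S) {u : E → ℝ}
      (hu : Continuous u) : 0 < ∫ x in S, Real.exp (t * u x) := by
    have : NeZero (volume.restrict S) :=
      ⟨fun h => hS₀.ne' (by simp [measureReal_def, Measure.restrict_eq_zero.1 h])⟩
    exact integral_exp_pos ((hu.const_mul t).rexp.continuousOn.integrableOn_compact hS)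
  have hLp := mgf_pos hL hL₀ hp
  have hKr := mgf_pos hK hK₀ hr
  have key := integral_exp_rpow_mul_le ha hb hab hL hK (hp.const_mul t) (hq.const_mul t)
    (hr.const_mul t) H
  have := Real.log_le_log (by positivity) key
  rwa [Real.log_mul (by positivity) (by positivity), Real.log_rpow hLp, Real.log_rpow hKr] at this

variable {V : ℝ} (hV : 0 < V) (hLV : volume.real L = V) (hKV : volume.real K = V)
  (hMV : volume.real (a • L + b • K) = V)
include hV hLV hKV hMV

theorem setIntegral_add_le_of_volume_eq {p q r : E → ℝ} (hp : Continuous p) (hq : Continuous q)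
    (hr : Continuous r) (H : ∀ x ∈ L, ∀ y ∈ K, a * p x + b * r y ≤ q (a • x + b • y)) :
    a * (∫ x in L, p x) + b * (∫ x in K, r x) ≤ ∫ x in a • L + b • K, q x := by
  have hM : IsCompact (a • L + b • K) := (hL.smul a).add (hK.smul b)
  have hderiv := ((analyticAt_cgf_restrict hM hq 0).differentiableAt.hasDerivAt).sub <|
    ((analyticAt_cgf_restrict hL hp 0).differentiableAt.hasDerivAt.const_mul a).add
      ((analyticAt_cgf_restrict hK hr 0).differentiableAt.hasDerivAt.const_mul b)
  rw [deriv_cgf_restrict_zero hM hq, deriv_cgf_restrict_zero hL hp, deriv_cgf_restrict_zero hK hr,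
    hLV, hKV, hMV] at hderiv
  have hnonneg := nonneg_of_hasDerivAt_of_nonneg hderiv ?_ fun t ht => sub_nonneg.2 <|
    cgf_add_cgf_le ha hb hab hL hK (hLV ▸ hV) (hKV ▸ hV) hp hq hr fun x hx y hy => ?_
  · refine (div_le_div_iff_of_pos_right hV).1 ((sub_nonneg.1 hnonneg).trans_eq' ?_)
    ring
  · simp only [Pi.sub_apply, Pi.add_apply, cgf_restrict_zero, hLV, hKV, hMV, ← add_mul, hab]
    ring
  · nlinarith [H x hx y hy]

theorem setIntegral_inner_sq_add_le_of_volume_eq (hL_center : ∫ x in L, x = 0)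
    (hK_center : ∫ x in K, x = 0) (v : E) :
    a * (∫ x in L, ⟪v, x⟫ ^ 2) + b * (∫ x in K, ⟪v, x⟫ ^ 2) ≤ ∫ x in a • L + b • K, ⟪v, x⟫ ^ 2 := by
  have hM : IsCompact (a • L + b • K) := (hL.smul a).add (hK.smul b)
  have hv : Continuous fun x : E => ⟪v, x⟫ := by fun_prop
  have second_order := add_deriv_deriv_le_of_add_le (a := a) (b := b) (x := 0)
    (analyticAt_cgf_restrict hL hv) (analyticAt_cgf_restrict hK hv) (analyticAt_cgf_restrict hM hv)
    (by simp only [cgf_restrict_zero, hLV, hKV, hMV, ← add_mul, hab, one_mul])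
    fun t => cgf_add_cgf_le ha hb hab hL hK (hLV ▸ hV) (hKV ▸ hV) hv hv hv fun x _ y _ => by
      simp only [inner_add_right, inner_smul_right]
      linarith
  have id_integrable {S : Set E} (hS : IsCompact S) : IntegrableOn (fun x : E => x) S :=
    continuous_id.continuousOn.integrableOn_compact hS
  rw [deriv_deriv_cgf_restrict_zero hM hv, deriv_deriv_cgf_restrict_zero hL hv,
    deriv_deriv_cgf_restrict_zero hK hv, integral_inner (id_integrable hL), hL_center,
    integral_inner (id_integrable hK), hK_center, inner_zero_right, hLV, hKV, hMV] at second_order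
  have divided : (a * (∫ x in L, ⟪v, x⟫ ^ 2) + b * ∫ x in K, ⟪v, x⟫ ^ 2) / V ≤
      (∫ x in a • L + b • K, ⟪v, x⟫ ^ 2) / V := by
    refine Eq.trans_le ?_ (second_order.trans (sub_le_self _ (sq_nonneg _)))
    ring
  exact (div_le_div_iff_of_pos_right hV).1 divided

theorem setIntegral_norm_sq_add_le_of_volume_eq (hL_center : ∫ x in L, x = 0)
    (hK_center : ∫ x in K, x = 0) :
    a * (∫ x in L, ‖x‖ ^ 2) + b * (∫ x in K, ‖x‖ ^ 2) ≤ ∫ x in a • L + b • K, ‖x‖ ^ 2 := by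
  have sum_eq {S : Set E} (hS : IsCompact S) :
      ∫ x in S, ‖x‖ ^ 2 = ∑ i, ∫ x in S, ⟪stdOrthonormalBasis ℝ E i, x⟫ ^ 2 := by
    rw [← integral_finsetSum _ fun i _ =>
      (ContinuousOn.integrableOn_compact hS (by fun_prop) : IntegrableOn _ _ _)]
    simp only [OrthonormalBasis.sum_sq_inner_right]
  rw [sum_eq hL, sum_eq hK, sum_eq ((hL.smul a).add (hK.smul b)), Finset.mul_sum, Finset.mul_sum,
    ← Finset.sum_add_distrib]
  exact Finset.sum_le_sum fun i _ => setIntegral_inner_sq_add_le_of_volume_eq ha hb hab hL hK hV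
    hLV hKV hMV hL_center hK_center _

/- The quadratic term is chosen so that `a‖x‖² + b‖y‖² = ‖ax + by‖² + ab‖x - y‖²` absorbs the
linear growth of `f`. -/
theorem mul_sub_setIntegral_le_of_volume_eq (hL_center : ∫ x in L, x = 0)
    (hK_center : ∫ x in K, x = 0) {f : E → ℝ} (hf : LipschitzWith 1 f) {d : ℝ} (hd : 0 ≤ d) :
    d * ((∫ x in L, f x) - ∫ x in K, f x) ≤ V * (d ^ 2 / (4 * a * b)) := by
  have hfc := hf.continuous
  have integrable {S : Set E} (hS : IsCompact S) {u : E → ℝ} (hu : Continuous u) :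
      IntegrableOn u S := hu.continuousOn.integrableOn_compact hS
  have hM : IsCompact (a • L + b • K) := (hL.smul a).add (hK.smul b)
  have cancel (s t : ℝ) : a * (d / a * s) + b * (-(d / b) * t) = d * (s - t) := by
    field_simp
    ring
  have first_order := setIntegral_add_le_of_volume_eq ha hb hab hL hK hV hLV hKV hMV
    (p := fun x => d / a * f x - ‖x‖ ^ 2) (r := fun y => -(d / b) * f y - ‖y‖ ^ 2)
    (q := fun z => d ^ 2 / (4 * a * b) - ‖z‖ ^ 2) (by fun_prop) (by fun_prop) (by fun_prop)
    fun x _ y _ => by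
      have hxy : d * (f x - f y) ≤ d * ‖x - y‖ := by
        gcongr
        exact (le_abs_self _).trans (by simpa [dist_eq_norm] using hf.dist_le_mul x y)
      have amgm : d * ‖x - y‖ ≤ a * b * ‖x - y‖ ^ 2 + d ^ 2 / (4 * a * b) := by
        have : 0 ≤ a * b * (‖x - y‖ - d / (2 * a * b)) ^ 2 := by positivity
        field_simp at this ⊢
        linarith
      linarith [mul_norm_sq_add_mul_norm_sq hab x y, cancel (f x) (f y)]
  have second_order := setIntegral_norm_sq_add_le_of_volume_eq ha hb hab hL hK hV hLV hKV hMV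
    hL_center hK_center
  rw [integral_sub (integrable hL (by fun_prop)) (integrable hL (by fun_prop)),
    integral_sub (integrable hK (by fun_prop)) (integrable hK (by fun_prop)),
    integral_sub (integrable hM (by fun_prop)) (integrable hM (by fun_prop)),
    integral_const_mul, integral_const_mul, setIntegral_const, hMV, smul_eq_mul] at first_order
  linarith [cancel (∫ x in L, f x) (∫ x in K, f x)]

theorem setIntegral_le_of_lipschitzWith_of_volume_eq (hL_center : ∫ x in L, x = 0)
    (hK_center : ∫ x in K, x = 0) {f : E → ℝ} (hf : LipschitzWith 1 f) :
    ∫ x in L, f x ≤ ∫ x in K, f x := by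
  refine le_of_forall_pos_le_add fun ε hε => ?_
  have hd : 0 < ε / (V / (4 * a * b)) := by positivity
  have hquad := mul_sub_setIntegral_le_of_volume_eq ha hb hab hL hK hV hLV hKV hMV hL_center
    hK_center hf hd.le
  have hlin : V * ((ε / (V / (4 * a * b))) ^ 2 / (4 * a * b)) = ε / (V / (4 * a * b)) * ε := by
    field_simp
  rw [hlin] at hquad
  linarith [le_of_mul_le_mul_left hquad hd]

end BrunnMinkowskiEquality

theorem subset_of_setIntegral_infDist_nonpos (hL : IsCompact L) (hL_conv : Convex ℝ L)
    (hL_int : (interior L).Nonempty) (hK : IsClosed K) (hK₀ : K.Nonempty)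
    (h : ∫ x in L, infDist x K ≤ 0) : L ⊆ K := by
  have h₀ := (setIntegral_eq_zero_iff_of_nonneg_ae (ae_of_all _ fun x => infDist_nonneg)
    ((continuous_infDist_pt K).continuousOn.integrableOn_compact hL)).1
    (h.antisymm (integral_nonneg fun x => infDist_nonneg))
  have hnull : volume (L \ K) = 0 := by
    have hae := (ae_restrict_iff' hL.measurableSet).1 h₀
    refine measure_mono_null (fun x hx => ?_) (ae_iff.1 hae)
    exact fun h => hx.2 ((hK.mem_iff_infDist_zero hK₀).2 (h hx.1))
  have hint : interior L ⊆ K := sdiff_eq_empty.1 <|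
    (isOpen_interior.sdiff hK).eq_empty_of_measure_zero <|
      measure_mono_null (sdiff_subset_sdiff_left interior_subset) hnull
  calc L = closure (interior L) := by
        rw [hL_conv.closure_interior_eq_closure_of_nonempty_interior hL_int, hL.isClosed.closure_eq]
    _ ⊆ K := closure_minimal hint hK

theorem volume_real_pos (hL : IsCompact L) (hL_int : (interior L).Nonempty) :
    0 < volume.real L :=
  ENNReal.toReal_pos (Measure.measure_pos_of_nonempty_interior _ hL_int).ne' hL.measure_lt_top.ne

theorem volume_real_vadd (x : E) (M : Set E) : volume.real (x +ᵥ M) = volume.real M := by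
  rw [measureReal_def, measure_vadd, measureReal_def]

theorem exists_setIntegral_vadd_eq_zero (hL : IsCompact L) (hL₀ : volume.real L ≠ 0) :
    ∃ c : E, ∫ x in c +ᵥ L, x = 0 := by
  refine ⟨-(volume.real L)⁻¹ • ∫ x in L, x, ?_⟩
  have translate (c : E) : ∫ x in c +ᵥ L, x = ∫ x in L, (c + x) :=
    (measurePreserving_add_left volume c).setIntegral_image_emb (measurableEmbedding_addLeft c)
      (fun x => x) L
  rw [translate, integral_add (continuousOn_const.integrableOn_compact hL)
    (continuous_id'.continuousOn.integrableOn_compact hL), setIntegral_const, neg_smul, smul_neg,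
    smul_inv_smul₀ hL₀]
  exact neg_add_cancel _

theorem eq_of_volume_eq_of_center_eq_zero {a b : ℝ} (ha : 0 < a) (hb : 0 < b) (hab : a + b = 1)
    (hL : IsCompact L) (hL_conv : Convex ℝ L) (hL_int : (interior L).Nonempty)
    (hK : IsCompact K) (hK_conv : Convex ℝ K) (hK_int : (interior K).Nonempty)
    (hKV : volume.real K = volume.real L) (hMV : volume.real (a • L + b • K) = volume.real L)
    (hL_center : ∫ x in L, x = 0) (hK_center : ∫ x in K, x = 0) : L = K := by
  have hV := volume_real_pos hL hL_int
  have integral_le {f : E → ℝ} (hf : LipschitzWith 1 f) : ∫ x in L, f x ≤ ∫ x in K, f x :=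
    setIntegral_le_of_lipschitzWith_of_volume_eq ha hb hab hL hK hV rfl hKV hMV hL_center
      hK_center hf
  have integral_infDist_self (S : Set E) : ∫ x in S, infDist x S = 0 :=
    setIntegral_eq_zero_of_forall_eq_zero fun x hx => infDist_zero_of_mem hx
  apply Subset.antisymm
  · refine subset_of_setIntegral_infDist_nonpos hL hL_conv hL_int hK.isClosed
      (hK_int.mono interior_subset) ?_
    exact (integral_le (lipschitz_infDist_pt K)).trans_eq (integral_infDist_self K)
  · refine subset_of_setIntegral_infDist_nonpos hK hK_conv hK_int hL.isClosed
      (hL_int.mono interior_subset) ?_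
    have := integral_le (lipschitz_infDist_pt L).neg
    simpa [integral_neg, integral_infDist_self L] using this

theorem exists_eq_vadd_of_volume_eq {a b : ℝ} (ha : 0 < a) (hb : 0 < b) (hab : a + b = 1)
    (hL : IsCompact L) (hL_conv : Convex ℝ L) (hL_int : (interior L).Nonempty)
    (hK : IsCompact K) (hK_conv : Convex ℝ K) (hK_int : (interior K).Nonempty)
    (hKV : volume.real K = volume.real L) (hMV : volume.real (a • L + b • K) = volume.real L) :
    ∃ x : E, L = x +ᵥ K := by
  obtain ⟨c, hc⟩ := exists_setIntegral_vadd_eq_zero hL (volume_real_pos hL hL_int).ne'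
  obtain ⟨d, hd⟩ := exists_setIntegral_vadd_eq_zero hK (volume_real_pos hK hK_int).ne'
  have combination : a • (c +ᵥ L) + b • (d +ᵥ K) = (a • c + b • d) +ᵥ (a • L + b • K) := by
    simp only [← singleton_vadd, vadd_eq_add, smul_add, smul_set_singleton,
      ← singleton_add_singleton]
    exact add_add_add_comm _ _ _ _
  have interior_nonempty {S : Set E} (x : E) (hS : (interior S).Nonempty) :
      (interior (x +ᵥ S)).Nonempty := by
    rw [interior_vadd]
    exact hS.vadd_set
  have translates_eq := eq_of_volume_eq_of_center_eq_zero ha hb hab (hL.vadd c) (hL_conv.vadd c)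
    (interior_nonempty c hL_int) (hK.vadd d) (hK_conv.vadd d) (interior_nonempty d hK_int)
    (by rw [volume_real_vadd, volume_real_vadd, hKV])
    (by rw [combination, volume_real_vadd, volume_real_vadd, hMV]) hc hd
  exact ⟨-c + d, by rw [add_vadd, ← translates_eq, neg_vadd_vadd]⟩

end EuclideanVolume

section Segment

variable {E : Type*} [NormedAddCommGroup E] [NormedSpace ℝ E]

theorem zero_mem_segment_neg (z : E) : 0 ∈ segment ℝ (-z) z :=
  ⟨1 / 2, 1 / 2, by norm_num, by norm_num, by norm_num, by simp⟩

theorem isCompact_segment (x y : E) : IsCompact (segment ℝ x y) := by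
  rw [← convexHull_pair (𝕜 := ℝ)]
  exact (toFinite _).isCompact_convexHull ℝ

theorem segment_zero_smul (z : E) {c : ℝ} (hc : 0 ≤ c) :
    segment ℝ 0 (c • z) = (· • z) '' Icc 0 c := by
  rw [← segment_eq_Icc hc, ← zero_smul ℝ z]
  exact (image_segment ℝ (LinearMap.toSpanSingleton ℝ E z).toAffineMap 0 c).symm

theorem smul_set_segment (c : ℝ) (x y : E) : c • segment ℝ x y = segment ℝ (c • x) (c • y) := by
  rw [← image_smul]
  exact image_segment ℝ (LinearMap.lsmul ℝ E c).toAffineMap x y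

theorem segment_neg_eq_vadd (z : E) : segment ℝ (-z) z = -z +ᵥ segment ℝ 0 ((2 : ℝ) • z) := by
  rw [vadd_segment]
  congr 1 <;> simp only [vadd_eq_add] <;> module

theorem add_segment_zero_add_union (M : Set E) (z : E) {a b : ℝ} (ha : 0 ≤ a) (hb : 0 ≤ b) :
    (M + segment ℝ 0 (a • z)) ∪ (a • z +ᵥ (M + segment ℝ 0 (b • z))) =
      M + segment ℝ 0 ((a + b) • z) := by
  have hvadd : a • z +ᵥ (· • z) '' Icc 0 b = (· • z) '' Icc a (a + b) := by
    have hIcc : Icc a (a + b) = (a + ·) '' Icc 0 b := by rw [image_const_add_Icc, add_zero]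
    simp only [hIcc, ← image_vadd, image_image, vadd_eq_add, add_smul]
  rw [segment_zero_smul z ha, segment_zero_smul z hb, segment_zero_smul z (add_nonneg ha hb),
    ← add_vadd_comm, hvadd, ← add_union, ← image_union,
    Icc_union_Icc_eq_Icc ha (le_add_of_nonneg_right hb)]

theorem add_segment_zero_inter_vadd {M : Set E} (hM : Convex ℝ M) (z : E) {a b : ℝ} (ha : 0 ≤ a)
    (hb : 0 ≤ b) :
    (M + segment ℝ 0 (a • z)) ∩ (a • z +ᵥ (M + segment ℝ 0 (b • z))) = a • z +ᵥ M := by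
  rw [segment_zero_smul z ha, segment_zero_smul z hb]
  refine Subset.antisymm ?_ (subset_inter ?_ ?_)
  · rintro _ ⟨⟨m, hm, _, ⟨s, hs, rfl⟩, rfl⟩, _, ⟨m', hm', _, ⟨t, ht, rfl⟩, rfl⟩, hmm'⟩
    refine ⟨m' + t • z, ?_, hmm'⟩
    have hm_eq : m = m' + (t + (a - s)) • z := by
      rw [eq_sub_of_add_eq hmm'.symm]
      simp only [vadd_eq_add]
      module
    have hratio : t / (t + (a - s)) ∈ Icc (0 : ℝ) 1 :=
      ⟨div_nonneg ht.1 (by linarith [ht.1, hs.2]),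
        div_le_one_of_le₀ (by linarith [hs.2]) (by linarith [ht.1, hs.2])⟩
    have hmem := hM.add_smul_sub_mem hm' hm hratio
    rwa [hm_eq, add_sub_cancel_left, smul_smul,
      div_mul_cancel_of_imp fun h => by linarith [ht.1, hs.2]] at hmem
  · rintro _ ⟨m, hm, rfl⟩
    exact ⟨m, hm, a • z, ⟨a, ⟨ha, le_rfl⟩, rfl⟩, add_comm _ _⟩
  · exact vadd_set_mono (subset_add_left M ⟨0, ⟨le_rfl, hb⟩, zero_smul ℝ z⟩)

end Segment

section SupportFunction

variable {E : Type*} [NormedAddCommGroup E] [InnerProductSpace ℝ E] {K C D : Set E}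

/-- The support function `h_K(v) = sup_{x ∈ K} ⟨v, x⟩` of a set `K`; it is meaningful for nonempty
bounded `K` only, since `sSup` of an empty or unbounded set of reals is `0`. -/
noncomputable def supportFun (K : Set E) (v : E) : ℝ :=
  sSup ((⟪v, ·⟫) '' K)

theorem supportFun_add (hC : IsCompact C) (hC₀ : C.Nonempty) (hD : IsCompact D)
    (hD₀ : D.Nonempty) (v : E) : supportFun (C + D) v = supportFun C v + supportFun D v := by
  have himage : (⟪v, ·⟫) '' (C + D) = (⟪v, ·⟫) '' C + (⟪v, ·⟫) '' D :=
    image_add (innerSL ℝ v)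
  rw [supportFun, himage, csSup_add (hC₀.image _) (hC.image (by fun_prop)).bddAbove
    (hD₀.image _) (hD.image (by fun_prop)).bddAbove, supportFun, supportFun]

theorem supportFun_neg_right (K : Set E) (v : E) : supportFun K (-v) = supportFun (-K) v := by
  simp only [supportFun, ← image_neg_eq_neg, image_image, inner_neg_left, inner_neg_right]

theorem supportFun_smul_right (K : Set E) {c : ℝ} (hc : 0 ≤ c) (v : E) :
    supportFun K (c • v) = c * supportFun K v := by
  rw [supportFun, supportFun, ← smul_eq_mul, ← Real.sSup_smul_of_nonneg hc, ← image_smul,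
    image_image]
  simp only [real_inner_smul_left, smul_eq_mul]

theorem continuous_supportFun (hK : IsCompact K) : Continuous (supportFun K) :=
  hK.continuous_sSup continuous_inner

theorem supportFun_segment_neg (z v : E) : supportFun (segment ℝ (-z) z) v = |⟪v, z⟫| := by
  have himage : (⟪v, ·⟫) '' segment ℝ (-z) z = uIcc (-⟪v, z⟫) ⟪v, z⟫ := by
    rw [← segment_eq_uIcc, ← inner_neg_right]
    exact image_segment ℝ (innerSL ℝ v).toLinearMap.toAffineMap (-z) z
  rw [supportFun, himage, uIcc, csSup_Icc (inf_le_sup), sup_comm]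
  rfl

theorem subset_of_supportFun_le (hC : IsClosed C) (hC_conv : Convex ℝ C) (hC₀ : C.Nonempty)
    [CompleteSpace E] (hD : IsCompact D) (h : ∀ v, supportFun D v ≤ supportFun C v) : D ⊆ C := by
  intro x hx
  by_contra hxC
  obtain ⟨f, u, hfC, hfx⟩ := geometric_hahn_banach_closed_point hC_conv hC hxC
  set v := (InnerProductSpace.toDual ℝ E).symm f
  have hf (y : E) : ⟪v, y⟫ = f y := InnerProductSpace.toDual_symm_apply
  have hCu : supportFun C v ≤ u :=
    csSup_le (hC₀.image _) (forall_mem_image.2 fun y hy => (hf y).trans_le (hfC y hy).le)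
  have hxD : ⟪v, x⟫ ≤ supportFun D v :=
    le_csSup (hD.image (by fun_prop)).bddAbove (mem_image_of_mem _ hx)
  linarith [h v, hf x]

end SupportFunction

section Zonotope

variable {E : Type*} [NormedAddCommGroup E] [InnerProductSpace ℝ E] {ι : Type*}

/-- The zonotope `∑ [-zᵢ, zᵢ]` generated by the vectors `zᵢ`, `i ∈ s`. -/
def zonotope (s : Finset ι) (z : ι → E) : Set E :=
  ∑ i ∈ s, segment ℝ (-z i) (z i)

theorem zonotope_empty (z : ι → E) : zonotope ∅ z = 0 :=
  Finset.sum_empty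

theorem zonotope_insert [DecidableEq ι] {s : Finset ι} {i : ι} (hi : i ∉ s) (z : ι → E) :
    zonotope (insert i s) z = segment ℝ (-z i) (z i) + zonotope s z :=
  Finset.sum_insert hi

theorem isCompact_zonotope (s : Finset ι) (z : ι → E) : IsCompact (zonotope s z) := by
  classical
  induction s using Finset.induction_on with
  | empty => rw [zonotope_empty]; exact isCompact_singleton
  | insert i s hi ih => rw [zonotope_insert hi]; exact (isCompact_segment _ _).add ih

theorem convex_zonotope (s : Finset ι) (z : ι → E) : Convex ℝ (zonotope s z) :=
  convex_sum _ fun _ _ => convex_segment _ _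

theorem zero_mem_zonotope (s : Finset ι) (z : ι → E) : 0 ∈ zonotope s z := by
  simpa only [zonotope, Finset.sum_const_zero] using
    Set.finsetSum_mem_finsetSum s _ (fun _ => (0 : E)) fun i _ => zero_mem_segment_neg (z i)

theorem supportFun_zonotope (s : Finset ι) (z : ι → E) (v : E) :
    supportFun (zonotope s z) v = ∑ i ∈ s, |⟪v, z i⟫| := by
  classical
  induction s using Finset.induction_on with
  | empty => simp [zonotope_empty, supportFun]
  | insert i s hi ih =>
    rw [zonotope_insert hi, Finset.sum_insert hi, ← ih, ← supportFun_segment_neg,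
      supportFun_add (isCompact_segment _ _) ⟨0, zero_mem_segment_neg _⟩ (isCompact_zonotope s z)
        ⟨0, zero_mem_zonotope s z⟩]

end Zonotope

section SegmentIncrement

variable {E : Type*} [NormedAddCommGroup E] [InnerProductSpace ℝ E] [FiniteDimensional ℝ E]
  [MeasurableSpace E] [BorelSpace E]
  {K L : Set E}

theorem volume_real_smul_of_nonneg {c : ℝ} (hc : 0 ≤ c) (M : Set E) :
    volume.real (c • M) = c ^ Module.finrank ℝ E * volume.real M := by
  rw [measureReal_def, Measure.addHaar_smul_of_nonneg _ hc, ENNReal.toReal_mul,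
    ENNReal.toReal_ofReal (by positivity), measureReal_def]

theorem volume_real_add_segment_zero_add {M : Set E} (hM : IsCompact M) (hM_conv : Convex ℝ M)
    (z : E) {a b : ℝ} (ha : 0 ≤ a) (hb : 0 ≤ b) :
    volume.real (M + segment ℝ 0 ((a + b) • z)) + volume.real M =
      volume.real (M + segment ℝ 0 (a • z)) + volume.real (M + segment ℝ 0 (b • z)) := by
  have hcompact (c : ℝ) : IsCompact (M + segment ℝ 0 (c • z)) := hM.add (isCompact_segment _ _)
  rw [← add_segment_zero_add_union M z ha hb, ← volume_real_vadd (a • z) M,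
    ← add_segment_zero_inter_vadd hM_conv z ha hb,
    measureReal_union_add_inter ((hcompact b).vadd _).measurableSet
      (hcompact a).measure_ne_top ((hcompact b).vadd _).measure_ne_top, volume_real_vadd]

theorem volume_real_add_segment_zero_natCast_smul {M : Set E} (hM : IsCompact M)
    (hM_conv : Convex ℝ M) (z : E) (N : ℕ) :
    volume.real (M + segment ℝ 0 ((N : ℝ) • z)) - volume.real M =
      N * (volume.real (M + segment ℝ 0 z) - volume.real M) := by
  induction N with
  | zero => simp
  | succ N ih =>
    have hadd := volume_real_add_segment_zero_add hM hM_conv z N.cast_nonneg zero_le_one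
    rw [one_smul] at hadd
    push_cast
    linarith

/-- The increase in volume when the segment `[-z, z]` is added to `M`. For convex `M` it is linear
in the length of `z`, which makes it the directional derivative of the volume at `M` towards
`[-z, z]`. -/
noncomputable def segmentIncrement (M : Set E) (z : E) : ℝ :=
  volume.real (M + segment ℝ (-z) z) - volume.real M

theorem segmentIncrement_eq (M : Set E) (z : E) :
    segmentIncrement M z = volume.real (M + segment ℝ 0 ((2 : ℝ) • z)) - volume.real M := by
  rw [segmentIncrement, segment_neg_eq_vadd, add_vadd_comm, volume_real_vadd]

theorem segmentIncrement_inv_natCast_smul {M : Set E} (hM : IsCompact M) (hM_conv : Convex ℝ M)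
    (z : E) {N : ℕ} (hN : N ≠ 0) :
    segmentIncrement M ((N : ℝ)⁻¹ • z) = (N : ℝ)⁻¹ * segmentIncrement M z := by
  have hN' : (N : ℝ) ≠ 0 := Nat.cast_ne_zero.2 hN
  have h := volume_real_add_segment_zero_natCast_smul hM hM_conv ((N : ℝ)⁻¹ • (2 : ℝ) • z) N
  rw [smul_inv_smul₀ hN'] at h
  rw [segmentIncrement_eq, segmentIncrement_eq, smul_comm, h, inv_mul_cancel_left₀ hN']

theorem tendsto_volume_real_add_inv_natCast_smul {C : Set E} (hL : IsCompact L)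
    (hC : IsCompact C) (hC₀ : 0 ∈ C) :
    Tendsto (fun N : ℕ => volume.real (L + (N : ℝ)⁻¹ • C)) atTop (𝓝 (volume.real L)) := by
  obtain ⟨R, hR⟩ := hC.isBounded.exists_norm_le
  have hradius : Tendsto (fun N : ℕ => R / (N : ℝ)) atTop (𝓝 0) :=
    tendsto_const_div_atTop_nhds_zero_nat R
  have hthick : Tendsto (fun N : ℕ => volume.real (cthickening (R / N) L)) atTop
      (𝓝 (volume.real L)) :=
    (ENNReal.tendsto_toReal hL.measure_ne_top).comp
      ((tendsto_measure_cthickening_of_isCompact hL).comp hradius)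
  refine tendsto_of_tendsto_of_tendsto_of_le_of_le tendsto_const_nhds hthick
    (fun N => measureReal_mono ?_ (hL.add (hC.smul _)).measure_ne_top)
    (fun N => measureReal_mono ?_ hL.cthickening.measure_ne_top)
  · exact subset_add_left L (zero_mem_smul_set hC₀)
  · rintro _ ⟨x, hx, _, ⟨c, hc, rfl⟩, rfl⟩
    refine mem_cthickening_of_dist_le _ x _ _ hx ?_
    rw [dist_eq_norm, add_sub_cancel_left, norm_smul, norm_inv, Real.norm_natCast, div_eq_inv_mul]
    gcongr
    exact hR c hc

/-- The forward difference quotient `N (vol (L + C / N) - vol (L + M / N))`, whose limit is the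
derivative of `vol` at `L` towards `C` minus the one towards `M`. -/
noncomputable def volumeQuotient (L C M : Set E) (N : ℕ) : ℝ :=
  N * (volume.real (L + (N : ℝ)⁻¹ • C) - volume.real (L + (N : ℝ)⁻¹ • M))

variable {M : Set E} {ι : Type*}

theorem tendsto_volumeQuotient_add_segment (hL : IsCompact L) (hL_conv : Convex ℝ L)
    (hM : IsCompact M) (hM_conv : Convex ℝ M) (hM₀ : 0 ∈ M) (z : E) :
    Tendsto (volumeQuotient L (M + segment ℝ (-z) z) M) atTop (𝓝 (segmentIncrement L z)) := by
  refine ((tendsto_volume_real_add_inv_natCast_smul (hL.add (isCompact_segment (-z) z)) hM hM₀).sub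
    (tendsto_volume_real_add_inv_natCast_smul hL hM hM₀)).congr' ?_
  filter_upwards [eventually_ne_atTop 0] with N hN
  have hN' : (N : ℝ) ≠ 0 := Nat.cast_ne_zero.2 hN
  have hincr := segmentIncrement_inv_natCast_smul (hL.add (hM.smul (N : ℝ)⁻¹))
    (hL_conv.add (hM_conv.smul (N : ℝ)⁻¹)) z hN
  rw [segmentIncrement, segmentIncrement, ← smul_neg, ← smul_set_segment, add_assoc, ← smul_add,
    ← segmentIncrement] at hincr
  rw [volumeQuotient, hincr, mul_inv_cancel_left₀ hN', segmentIncrement, add_right_comm]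

theorem tendsto_volumeQuotient_add_zonotope (hL : IsCompact L) (hL_conv : Convex ℝ L)
    (hM : IsCompact M) (hM_conv : Convex ℝ M) (hM₀ : 0 ∈ M) (s : Finset ι) (z : ι → E) :
    Tendsto (volumeQuotient L (M + zonotope s z) M) atTop
      (𝓝 (∑ i ∈ s, segmentIncrement L (z i))) := by
  classical
  induction s using Finset.induction_on with
  | empty =>
    refine tendsto_const_nhds.congr fun N => ?_
    simp [volumeQuotient, zonotope_empty]
  | insert i s hi ih =>
    have hMZ₀ : 0 ∈ M + zonotope s z := by
      simpa using Set.add_mem_add hM₀ (zero_mem_zonotope s z)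
    have hstep := tendsto_volumeQuotient_add_segment hL hL_conv (hM.add (isCompact_zonotope s z))
      (hM_conv.add (convex_zonotope s z)) hMZ₀ (z i)
    rw [Finset.sum_insert hi]
    refine (hstep.add ih).congr fun N => ?_
    rw [zonotope_insert hi, add_comm (segment ℝ _ _), ← add_assoc M]
    simp only [volumeQuotient]
    ring

theorem volume_real_add_smul_self (hK_conv : Convex ℝ K) {t : ℝ} (ht : 0 ≤ t) :
    volume.real (K + t • K) = (1 + t) ^ Module.finrank ℝ E * volume.real K := by
  have hK_smul : K + t • K = (1 + t) • K := by rw [hK_conv.add_smul zero_le_one ht, one_smul]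
  rw [hK_smul, volume_real_smul_of_nonneg (by positivity)]

theorem tendsto_natCast_mul_sub_of_hasDerivAt {g : ℝ → ℝ} {g' : ℝ} (hg : HasDerivAt g g' 0) :
    Tendsto (fun N : ℕ => N * (g (N : ℝ)⁻¹ - g 0)) atTop (𝓝 g') := by
  have hinv : Tendsto (fun N : ℕ => (N : ℝ)⁻¹) atTop (𝓝[≠] 0) :=
    (tendsto_inv_atTop_nhdsGT_zero.comp tendsto_natCast_atTop_atTop).mono_right
      (nhdsWithin_mono _ fun _ hx => ne_of_gt hx)
  refine (hg.tendsto_slope_zero.comp hinv).congr fun N => ?_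
  simp

theorem tendsto_volumeQuotient_self (hK_conv : Convex ℝ K) :
    Tendsto (volumeQuotient K K 0) atTop (𝓝 (Module.finrank ℝ E * volume.real K)) := by
  have hderiv : HasDerivAt (fun x : ℝ => (1 + x) ^ Module.finrank ℝ E) (Module.finrank ℝ E) 0 := by
    simpa using ((hasDerivAt_id (0 : ℝ)).const_add 1).fun_pow (Module.finrank ℝ E)
  refine ((tendsto_natCast_mul_sub_of_hasDerivAt hderiv).mul_const _).congr fun N => ?_
  rw [volumeQuotient, volume_real_add_smul_self hK_conv (by positivity), smul_zero, add_zero,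
    add_zero, one_pow]
  ring

end SegmentIncrement

section GaussianAverage

open Polynomial

theorem integrable_eval_gaussianReal (p : ℝ[X]) (μ : ℝ) (v : NNReal) :
    Integrable (fun t => p.eval t) (gaussianReal μ v) := by
  induction p using Polynomial.induction_on' with
  | add p q hp hq =>
    simp only [eval_add]
    exact hp.add hq
  | monomial k c =>
    simp only [eval_monomial]
    exact (integrable_pow_of_mem_interior_integrableExpSet (X := id) (by simp) k).const_mul c

theorem integrable_gaussianPDFReal_mul {f : ℝ → ℝ} {μ : ℝ} {v : NNReal} (hv : v ≠ 0)
    (hf : Integrable f (gaussianReal μ v)) :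
    Integrable (fun t => gaussianPDFReal μ v t * f t) := by
  rw [gaussianReal_of_var_ne_zero _ hv, integrable_withDensity_iff_integrable_smul'
    (measurable_gaussianPDF μ v) (Eventually.of_forall fun _ => gaussianPDF_lt_top)] at hf
  simpa only [toReal_gaussianPDF, smul_eq_mul] using hf

theorem gaussianPDFReal_zero_neg (v : NNReal) (t : ℝ) :
    gaussianPDFReal 0 v (-t) = gaussianPDFReal 0 v t := by
  simp only [gaussianPDFReal, sub_zero, neg_sq]

theorem hasDerivAt_gaussianPDFReal_zero_one (t : ℝ) :
    HasDerivAt (gaussianPDFReal 0 1) (-t * gaussianPDFReal 0 1 t) t := by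
  have hexponent : HasDerivAt (fun t : ℝ => -(t - 0) ^ 2 / (2 * ((1 : NNReal) : ℝ))) (-t) t := by
    refine ((((hasDerivAt_id t).sub_const 0).fun_pow 2).fun_neg.div_const _).congr_deriv ?_
    simp only [id, sub_zero, NNReal.coe_one]
    ring
  refine (hexponent.exp.const_mul _).congr_deriv ?_
  rw [gaussianPDFReal]
  ring

/- `(t² - 1) φ(t)` is the second derivative of the density `φ`, so integrating by parts twice gives
`φ(s)`; `F` is the resulting antiderivative. -/
theorem integral_Ioi_gaussianPDFReal_mul (s : ℝ) :
    ∫ t in Ioi s, gaussianPDFReal 0 1 t * ((t ^ 2 - 1) * (t - s)) = gaussianPDFReal 0 1 s := by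
  let F : ℝ → ℝ := fun t => gaussianPDFReal 0 1 t * -(t * (t - s) + 1)
  have hderiv (t : ℝ) :
      HasDerivAt F (gaussianPDFReal 0 1 t * ((t ^ 2 - 1) * (t - s))) t := by
    refine ((hasDerivAt_gaussianPDFReal_zero_one t).mul
      (((hasDerivAt_id t).mul ((hasDerivAt_id t).sub_const s)).add_const 1).neg).congr_deriv ?_
    simp only [id, Pi.neg_apply, Pi.mul_apply]
    ring
  have hpoly (p : ℝ[X]) : Integrable fun t => gaussianPDFReal 0 1 t * p.eval t :=
    integrable_gaussianPDFReal_mul one_ne_zero (integrable_eval_gaussianReal p 0 1)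
  have hF_int : Integrable F := by
    simpa [F] using (hpoly (-(X * (X - C s) + 1)) :)
  have hF'_int : Integrable fun t => gaussianPDFReal 0 1 t * ((t ^ 2 - 1) * (t - s)) := by
    simpa using (hpoly ((X ^ 2 - 1) * (X - C s)) :)
  have hlim : Tendsto F atTop (𝓝 0) :=
    tendsto_zero_of_hasDerivAt_of_integrableOn_Ioi (a := s) (fun t _ => hderiv t)
      hF'_int.integrableOn hF_int.integrableOn
  rw [integral_Ioi_of_hasDerivAt_of_tendsto' (fun t _ => hderiv t) hF'_int.integrableOn hlim]
  simp [F]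

theorem integrable_sq_sub_one_mul_abs (s : ℝ) :
    Integrable (fun t => (t ^ 2 - 1) * |s + t|) (gaussianReal 0 1) := by
  have hpoly := integrable_eval_gaussianReal ((X ^ 2 - 1) * (C s + X)) 0 1
  refine hpoly.mono (by fun_prop) (Eventually.of_forall fun t => ?_)
  simp

theorem integral_sq_sub_one_mul_abs_gaussianReal (s : ℝ) :
    ∫ t, (t ^ 2 - 1) * |s + t| ∂gaussianReal 0 1 = 2 * gaussianPDFReal 0 1 s := by
  rw [integral_gaussianReal_eq_integral_smul one_ne_zero]
  simp only [smul_eq_mul]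
  have hright : ∫ t in Ioi (-s), gaussianPDFReal 0 1 t * ((t ^ 2 - 1) * |s + t|) =
      gaussianPDFReal 0 1 s := by
    rw [← gaussianPDFReal_zero_neg, ← integral_Ioi_gaussianPDFReal_mul]
    refine setIntegral_congr_fun measurableSet_Ioi fun t ht => ?_
    rw [mem_Ioi] at ht
    simp only [abs_of_pos (show 0 < s + t by linarith), sub_neg_eq_add, add_comm]
  have hleft : ∫ t in Iic (-s), gaussianPDFReal 0 1 t * ((t ^ 2 - 1) * |s + t|) =
      gaussianPDFReal 0 1 s := by
    rw [← integral_comp_neg_Ioi, ← integral_Ioi_gaussianPDFReal_mul]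
    refine setIntegral_congr_fun measurableSet_Ioi fun t ht => ?_
    rw [mem_Ioi] at ht
    simp only [gaussianPDFReal_zero_neg, neg_sq, abs_of_neg (show s + -t < 0 by linarith)]
    ring
  rw [← integral_add_compl measurableSet_Iic (integrable_gaussianPDFReal_mul one_ne_zero
    (integrable_sq_sub_one_mul_abs s)), compl_Iic, hright, hleft, two_mul]

theorem integral_sq_sub_one_gaussianReal : ∫ t, (t ^ 2 - 1) ∂gaussianReal 0 1 = 0 := by
  have hvar := variance_id_gaussianReal (μ := 0) (v := 1)
  rw [variance_of_integral_eq_zero aemeasurable_id integral_id_gaussianReal] at hvar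
  rw [integral_sub (by simpa using (integrable_eval_gaussianReal (X ^ 2) 0 1 :))
    (integrable_const _)]
  simpa [sub_eq_zero] using hvar

theorem integrable_sq_sub_one_gaussianReal :
    Integrable (fun t => t ^ 2 - 1) (gaussianReal 0 1) := by
  simpa using (integrable_eval_gaussianReal (X ^ 2 - 1) 0 1 :)

theorem integrable_abs_const_add_gaussianReal (s : ℝ) :
    Integrable (fun t => |s + t|) (gaussianReal 0 1) := by
  simpa using ((integrable_eval_gaussianReal (C s + X) 0 1).abs :)

variable {ι : Type*} [Fintype ι]

theorem indepFun_sq_sub_one_abs_pi {i j : ι} (hij : i ≠ j) (s : ℝ) :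
    IndepFun (fun z : ι → ℝ => z i ^ 2 - 1) (fun z => |s + z j|)
      (Measure.pi fun _ => gaussianReal 0 1) :=
  ((iIndepFun_pi (X := fun _ => id) fun _ => aemeasurable_id).indepFun hij).comp
    (φ := fun t : ℝ => t ^ 2 - 1) (ψ := fun t => |s + t|) (by fun_prop)
    (continuous_const.add continuous_id).abs.measurable

theorem integrable_sq_sub_one_mul_abs_pi (s : ℝ) (i j : ι) :
    Integrable (fun z : ι → ℝ => (z i ^ 2 - 1) * |s + z j|)
      (Measure.pi fun _ => gaussianReal 0 1) := by
  have hcomp {f : ℝ → ℝ} (k : ι) (hf : Integrable f (gaussianReal 0 1)) :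
      Integrable (fun z : ι → ℝ => f (z k)) (Measure.pi fun _ => gaussianReal 0 1) :=
    integrable_comp_eval hf
  obtain rfl | hij := eq_or_ne i j
  · exact hcomp i (integrable_sq_sub_one_mul_abs s)
  · exact (indepFun_sq_sub_one_abs_pi hij s).integrable_mul
      (hcomp i integrable_sq_sub_one_gaussianReal)
      (hcomp j (integrable_abs_const_add_gaussianReal s))

theorem integral_sq_sub_one_mul_abs_pi [DecidableEq ι] (s : ℝ) (i j : ι) :
    ∫ z : ι → ℝ, (z i ^ 2 - 1) * |s + z j| ∂Measure.pi (fun _ => gaussianReal 0 1) =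
      if i = j then 2 * gaussianPDFReal 0 1 s else 0 := by
  have hcomp {f : ℝ → ℝ} (k : ι) (hf : Integrable f (gaussianReal 0 1)) :
      ∫ z : ι → ℝ, f (z k) ∂Measure.pi (fun _ => gaussianReal 0 1) =
        ∫ t, f t ∂gaussianReal 0 1 :=
    integral_comp_eval hf.aestronglyMeasurable
  split_ifs with hij
  · subst hij
    exact (hcomp i (integrable_sq_sub_one_mul_abs s)).trans
      (integral_sq_sub_one_mul_abs_gaussianReal s)
  · rw [(indepFun_sq_sub_one_abs_pi hij s).integral_fun_mul_eq_mul_integral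
      (Continuous.aestronglyMeasurable (by fun_prop))
      (Continuous.aestronglyMeasurable (by fun_prop)),
      hcomp i integrable_sq_sub_one_gaussianReal, integral_sq_sub_one_gaussianReal, zero_mul]

variable {E : Type*} [NormedAddCommGroup E] [InnerProductSpace ℝ E] [FiniteDimensional ℝ E]

theorem exists_orthonormalBasis_apply_eq {v : E} (hv : ‖v‖ = 1) :
    ∃ (u : Finset E) (b : OrthonormalBasis u ℝ E) (i : u), b i = v := by
  have hortho : Orthonormal ℝ ((↑) : ({v} : Set E) → E) := by
    simp [hv]
  obtain ⟨u, b, hvu, hb⟩ := hortho.exists_orthonormalBasis_extension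
  exact ⟨u, b, ⟨v, by simpa using hvu⟩, by rw [hb]⟩

variable [MeasurableSpace E] [BorelSpace E]

theorem integral_norm_sq_sub_finrank_mul_abs_inner (y : E) {v : E} (hv : ‖v‖ = 1) :
    ∫ x, (‖x‖ ^ 2 - Module.finrank ℝ E) * |⟪y + x, v⟫| ∂stdGaussian E =
      2 * gaussianPDFReal 0 1 ⟪y, v⟫ := by
  classical
  obtain ⟨u, b, j, rfl⟩ := exists_orthonormalBasis_apply_eq hv
  have hexpand (z : u → ℝ) :
      (‖∑ i, z i • b i‖ ^ 2 - Module.finrank ℝ E) * |⟪y + ∑ i, z i • b i, b j⟫| =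
        ∑ i, (z i ^ 2 - 1) * |⟪y, b j⟫ + z j| := by
    have hnorm : ‖∑ i, z i • b i‖ ^ 2 = ∑ i, z i ^ 2 := by
      have hrepr := EuclideanSpace.real_norm_sq_eq (WithLp.toLp 2 z)
      rwa [← b.repr.symm.norm_map, ← b.sum_repr_symm] at hrepr
    rw [hnorm, Module.finrank_eq_card_basis b.toBasis, inner_add_left,
      b.orthonormal.inner_left_fintype, ← Finset.sum_mul]
    simp
  rw [stdGaussian_eq_map_pi_orthonormalBasis b, integral_map
    (Continuous.aemeasurable (by fun_prop)) (Continuous.aestronglyMeasurable (by fun_prop))]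
  simp only [hexpand]
  rw [integral_finsetSum _ fun i _ => integrable_sq_sub_one_mul_abs_pi _ i j]
  simp [integral_sq_sub_one_mul_abs_pi]

end GaussianAverage

section StoneWeierstrass

theorem mem_of_isClosed_of_mul_mem_span {X : Type*} [TopologicalSpace X] [CompactSpace X]
    {S : Set C(X, ℝ)} (hone : 1 ∈ S)
    (hmul : ∀ f ∈ S, ∀ g ∈ S, f * g ∈ Submodule.span ℝ S)
    (hsep : ∀ ⦃x y : X⦄, x ≠ y → ∃ f ∈ S, f x ≠ f y) {M : Submodule ℝ C(X, ℝ)}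
    (hM : IsClosed (M : Set C(X, ℝ))) (hS : S ⊆ M) (f : C(X, ℝ)) : f ∈ M := by
  have hmul_span : Submodule.span ℝ S * Submodule.span ℝ S ≤ Submodule.span ℝ S := by
    rw [Submodule.span_mul_span, Submodule.span_le]
    rintro _ ⟨f, hf, g, hg, rfl⟩
    exact hmul f hf g hg
  let B := (Submodule.span ℝ S).toSubalgebra (Submodule.subset_span hone)
    fun f g hf hg => hmul_span (Submodule.mul_mem_mul hf hg)
  have hB : B.SeparatesPoints := fun x y hxy => by
    obtain ⟨f, hf, hne⟩ := hsep hxy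
    exact ⟨f, ⟨f, Submodule.subset_span hf, rfl⟩, hne⟩
  have hBM : closure (B : Set C(X, ℝ)) ⊆ M :=
    closure_minimal (Submodule.span_le.2 hS : Submodule.span ℝ S ≤ M) hM
  exact hBM (ContinuousMap.continuousMap_mem_subalgebra_closure_of_separatesPoints B hB f)

end StoneWeierstrass

section AbsInner

variable {E : Type*} [NormedAddCommGroup E] [InnerProductSpace ℝ E]

/-- The support function `v ↦ |⟪y, v⟫|` of the segment from `-y` to `y`, as a continuous function
on the unit sphere depending continuously on `y`. -/
noncomputable def absInner : C(E, C(sphere (0 : E) 1, ℝ)) :=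
  ContinuousMap.curry ⟨fun p => |⟪p.1, (p.2 : E)⟫|, by fun_prop⟩

theorem absInner_apply (y : E) (v : sphere (0 : E) 1) : absInner y v = |⟪y, (v : E)⟫| := rfl

theorem abs_inner_sphere_le_norm (y : E) (v : sphere (0 : E) 1) : |⟪y, (v : E)⟫| ≤ ‖y‖ := by
  simpa using abs_real_inner_le_norm y (v : E)

/-- The function `v ↦ cos (⟪y, v⟫ + θ)` on the unit sphere. -/
noncomputable def cosInner (y : E) (θ : ℝ) : C(sphere (0 : E) 1, ℝ) :=
  ⟨fun v => Real.cos (⟪y, (v : E)⟫ + θ), by fun_prop⟩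

theorem cosInner_apply (y : E) (θ : ℝ) (v : sphere (0 : E) 1) :
    cosInner y θ v = Real.cos (⟪y, (v : E)⟫ + θ) := rfl

theorem cosInner_mul_cosInner (y z : E) (θ η : ℝ) :
    cosInner y θ * cosInner z η =
      (1 / 2 : ℝ) • cosInner (y + z) (θ + η) + (1 / 2 : ℝ) • cosInner (y - z) (θ - η) := by
  ext v
  simp only [ContinuousMap.mul_apply, ContinuousMap.add_apply, ContinuousMap.smul_apply,
    cosInner_apply, inner_add_left, inner_sub_left, smul_eq_mul]
  rw [add_add_add_comm, sub_add_sub_comm, Real.cos_add (_ + _), Real.cos_sub (_ + _)]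
  ring

theorem cosInner_add_cosInner_neg (y : E) (θ : ℝ) (v : sphere (0 : E) 1) :
    cosInner y θ v + cosInner y θ (-v) = 2 * Real.cos θ * cosInner y 0 v := by
  simp only [cosInner_apply, coe_neg_sphere, inner_neg_right, add_zero]
  rw [Real.cos_add, Real.cos_add, Real.cos_neg, Real.sin_neg]
  ring

theorem cosInner_self_one_ne {v w : sphere (0 : E) 1} (hvw : v ≠ w) :
    cosInner (v : E) 1 v ≠ cosInner (v : E) 1 w := by
  have hv : ⟪(v : E), (v : E)⟫ = 1 := by simp
  have hw : |⟪(v : E), (w : E)⟫| ≤ 1 := by simpa using abs_inner_sphere_le_norm (v : E) w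
  have hpi := Real.two_le_pi
  intro hcos
  have hinner : ⟪(v : E), (v : E)⟫ + 1 = ⟪(v : E), (w : E)⟫ + 1 :=
    Real.injOn_cos ⟨by linarith, by linarith⟩
      ⟨by linarith [neg_le_of_abs_le hw], by linarith [le_of_abs_le hw]⟩ hcos
  exact hvw (Subtype.ext
    ((inner_eq_one_iff_of_norm_eq_one (𝕜 := ℝ) (by simp) (by simp)).1 (by linarith)))

variable [FiniteDimensional ℝ E]

theorem norm_absInner_le (y : E) : ‖absInner y‖ ≤ ‖y‖ := by
  refine (ContinuousMap.norm_le _ (norm_nonneg _)).2 fun v => ?_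
  rw [absInner_apply, Real.norm_eq_abs, abs_abs]
  exact abs_inner_sphere_le_norm y v

variable (E) in
/-- The closure of the space of differences of support functions of zonotopes, restricted to the
unit sphere. -/
noncomputable def absInnerClosedSpan : Submodule ℝ C(sphere (0 : E) 1, ℝ) :=
  (Submodule.span ℝ (range absInner)).topologicalClosure

theorem isClosed_absInnerClosedSpan :
    IsClosed (absInnerClosedSpan E : Set C(sphere (0 : E) 1, ℝ)) :=
  Submodule.isClosed_topologicalClosure _

theorem absInner_mem_absInnerClosedSpan (y : E) : absInner y ∈ absInnerClosedSpan E :=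
  Submodule.le_topologicalClosure _ (Submodule.subset_span ⟨y, rfl⟩)

theorem integrable_norm_sq_sub_smul_absInner [MeasurableSpace E] [BorelSpace E] (c : ℝ) (y : E) :
    Integrable (fun x => (‖x‖ ^ 2 - c) • absInner (y + x)) (stdGaussian E) := by
  have hpow (k : ℕ) : Integrable (fun x : E => ‖x‖ ^ k) (stdGaussian E) :=
    (IsGaussian.memLp_id (stdGaussian E) k (by simp)).integrable_norm_pow'
  have hbound : Integrable (fun x : E => (‖x‖ ^ 2 + |c|) * (‖y‖ + ‖x‖)) (stdGaussian E) := by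
    refine ((((hpow 2).mul_const ‖y‖).add (hpow 3)).add
      (((hpow 1).add (integrable_const ‖y‖)).const_mul |c|)).congr (.of_forall fun x => ?_)
    simp only [Pi.add_apply]
    ring
  refine hbound.mono' (Continuous.aestronglyMeasurable (by fun_prop)) (.of_forall fun x => ?_)
  rw [norm_smul, Real.norm_eq_abs]
  gcongr
  · exact (abs_sub _ _).trans_eq (by rw [abs_of_nonneg (sq_nonneg ‖x‖)])
  · exact (norm_absInner_le _).trans (norm_add_le _ _)

theorem exp_neg_inner_sq_mem_absInnerClosedSpan {f : C(sphere (0 : E) 1, ℝ)} (y : E)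
    (hf : ∀ v, f v = Real.exp (-⟪y, (v : E)⟫ ^ 2)) : f ∈ absInnerClosedSpan E := by
  borelize E
  let c : ℝ := (Module.finrank ℝ E : ℝ)
  let g := ∫ x, (‖x‖ ^ 2 - c) • absInner (√2 • y + x) ∂stdGaussian E
  have hg : g ∈ absInnerClosedSpan E :=
    (absInnerClosedSpan E).convex.integral_mem isClosed_absInnerClosedSpan
      (.of_forall fun x => Submodule.smul_mem _ _ (absInner_mem_absInnerClosedSpan _))
      (integrable_norm_sq_sub_smul_absInner c _)
  have hfg : f = (√(2 * Real.pi) / 2) • g := by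
    ext v
    rw [ContinuousMap.smul_apply, ContinuousMap.integral_apply
      (integrable_norm_sq_sub_smul_absInner c _), hf]
    simp only [ContinuousMap.smul_apply, absInner_apply, smul_eq_mul]
    rw [integral_norm_sq_sub_finrank_mul_abs_inner _ (norm_eq_of_mem_sphere v), gaussianPDFReal,
      real_inner_smul_left, sub_zero, mul_pow, Real.sq_sqrt zero_le_two, NNReal.coe_one, mul_one,
      mul_one, ← mul_neg, mul_div_cancel_left₀ _ two_ne_zero]
    have hsqrt : √(2 * Real.pi) ≠ 0 := by positivity
    field_simp
  rw [hfg]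
  exact Submodule.smul_mem _ _ hg

theorem comp_inner_sq_mem_absInnerClosedSpan (y : E) {h : ℝ → ℝ} (hh : Continuous h)
    {f : C(sphere (0 : E) 1, ℝ)} (hf : ∀ v, f v = h (⟪y, (v : E)⟫ ^ 2)) :
    f ∈ absInnerClosedSpan E := by
  have hmaps (v : sphere (0 : E) 1) : ⟪y, (v : E)⟫ ^ 2 ∈ Icc 0 (‖y‖ ^ 2) :=
    ⟨sq_nonneg _, sq_le_sq' (neg_le_of_abs_le (abs_inner_sphere_le_norm y v))
      (le_of_abs_le (abs_inner_sphere_le_norm y v))⟩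
  let q : C(sphere (0 : E) 1, Icc (0 : ℝ) (‖y‖ ^ 2)) := ⟨fun v => ⟨_, hmaps v⟩, by fun_prop⟩
  let P := ContinuousMap.compRightAlgHom ℝ ℝ q
  let S : Set C(Icc (0 : ℝ) (‖y‖ ^ 2), ℝ) :=
    {g | ∃ a : ℝ, 0 ≤ a ∧ ∀ t, g t = Real.exp (-a * t)}
  have hmul : ∀ g ∈ S, ∀ g' ∈ S, g * g' ∈ Submodule.span ℝ S := by
    rintro g ⟨a, ha, hg⟩ g' ⟨b, hb, hg'⟩
    refine Submodule.subset_span ⟨a + b, by positivity, fun t => ?_⟩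
    rw [ContinuousMap.mul_apply, hg, hg', ← Real.exp_add]
    ring_nf
  have hsep : ∀ ⦃s t : Icc (0 : ℝ) (‖y‖ ^ 2)⦄, s ≠ t → ∃ g ∈ S, g s ≠ g t := fun s t hst =>
    ⟨⟨fun t => Real.exp (-1 * t), by fun_prop⟩, ⟨1, zero_le_one, fun t => rfl⟩, by
      simpa [Subtype.ext_iff] using hst⟩
  have hS : S ⊆ (absInnerClosedSpan E).comap P.toLinearMap := by
    rintro g ⟨a, ha, hg⟩
    refine exp_neg_inner_sq_mem_absInnerClosedSpan (√a • y) fun v => (hg (q v)).trans ?_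
    simp [q, inner_smul_left, mul_pow, Real.sq_sqrt ha]
  have hclosed : IsClosed (((absInnerClosedSpan E).comap P.toLinearMap : Submodule ℝ _) :
      Set C(Icc (0 : ℝ) (‖y‖ ^ 2), ℝ)) :=
    isClosed_absInnerClosedSpan.preimage
      (ContinuousMap.compRightAlgHom_continuous (R := ℝ) (A := ℝ) q)
  obtain rfl : f = P ⟨fun t => h t, by fun_prop⟩ := ContinuousMap.ext hf
  have hone : 1 ∈ S := ⟨0, le_rfl, by simp⟩
  exact mem_of_isClosed_of_mul_mem_span hone hmul hsep hclosed hS _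

theorem cosInner_zero_mem_absInnerClosedSpan (y : E) : cosInner y 0 ∈ absInnerClosedSpan E :=
  comp_inner_sq_mem_absInnerClosedSpan y (h := fun t => Real.cos √t) (by fun_prop) fun v => by
    rw [cosInner_apply, add_zero, Real.sqrt_sq_eq_abs, Real.cos_abs]

theorem mem_absInnerClosedSpan_of_even {f : C(sphere (0 : E) 1, ℝ)} (hf : ∀ v, f (-v) = f v) :
    f ∈ absInnerClosedSpan E := by
  let P : C(sphere (0 : E) 1, ℝ) →ₗ[ℝ] C(sphere (0 : E) 1, ℝ) :=
    LinearMap.id + (ContinuousMap.compRightAlgHom ℝ ℝ ⟨Neg.neg, continuous_neg⟩).toLinearMap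
  have hP_apply (g : C(sphere (0 : E) 1, ℝ)) (v) : P g v = g v + g (-v) := rfl
  have hP_cont : Continuous P :=
    continuous_id.add (ContinuousMap.compRightAlgHom_continuous (R := ℝ) (A := ℝ) _)
  let S : Set C(sphere (0 : E) 1, ℝ) := {g | ∃ y θ, g = cosInner y θ}
  have hone : 1 ∈ S := ⟨0, 0, by ext; simp [cosInner_apply]⟩
  have hmul : ∀ g ∈ S, ∀ g' ∈ S, g * g' ∈ Submodule.span ℝ S := by
    rintro _ ⟨y, θ, rfl⟩ _ ⟨z, η, rfl⟩
    rw [cosInner_mul_cosInner]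
    exact Submodule.add_mem _ (Submodule.smul_mem _ _ (Submodule.subset_span ⟨_, _, rfl⟩))
      (Submodule.smul_mem _ _ (Submodule.subset_span ⟨_, _, rfl⟩))
  have hsep : ∀ ⦃v w : sphere (0 : E) 1⦄, v ≠ w → ∃ g ∈ S, g v ≠ g w := fun v w hvw =>
    ⟨cosInner (v : E) 1, ⟨v, 1, rfl⟩, cosInner_self_one_ne hvw⟩
  have hS : S ⊆ (absInnerClosedSpan E).comap P := by
    rintro _ ⟨y, θ, rfl⟩
    have hP_cos : P (cosInner y θ) = (2 * Real.cos θ) • cosInner y 0 :=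
      ContinuousMap.ext fun v => cosInner_add_cosInner_neg y θ v
    rw [SetLike.mem_coe, Submodule.mem_comap, hP_cos]
    exact Submodule.smul_mem _ _ (cosInner_zero_mem_absInnerClosedSpan y)
  have hPf : P f ∈ absInnerClosedSpan E :=
    mem_of_isClosed_of_mul_mem_span hone hmul hsep
      (M := (absInnerClosedSpan E).comap P) (isClosed_absInnerClosedSpan.preimage hP_cont) hS f
  have hf_eq : f = (1 / 2 : ℝ) • P f := by
    ext v
    rw [ContinuousMap.smul_apply, hP_apply, hf, smul_eq_mul]
    ring
  exact hf_eq ▸ Submodule.smul_mem _ _ hPf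

end AbsInner

section ZonotopeApproximation

variable {E : Type*} [NormedAddCommGroup E] [InnerProductSpace ℝ E] {K Q : Set E}

theorem supportFun_zonotope_posPart_sub_negPart (c : E →₀ ℝ) (v : E) :
    supportFun (zonotope c.support fun y => (c y)⁺ • y) v -
        supportFun (zonotope c.support fun y => (c y)⁻ • y) v =
      c.sum fun y a => a * |⟪v, y⟫| := by
  rw [supportFun_zonotope, supportFun_zonotope, ← Finset.sum_sub_distrib, Finsupp.sum]
  refine Finset.sum_congr rfl fun y _ => ?_
  rw [real_inner_smul_right, real_inner_smul_right, abs_mul, abs_mul,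
    abs_of_nonneg (posPart_nonneg _), abs_of_nonneg (negPart_nonneg _), ← sub_mul,
    posPart_sub_negPart]

theorem mul_norm_le_supportFun_zonotope {ι : Type*} [Fintype ι] (b : OrthonormalBasis ι ℝ E)
    {r : ℝ} (hr : 0 ≤ r) (v : E) :
    r * ‖v‖ ≤ supportFun (zonotope Finset.univ fun i => r • b i) v :=
  calc r * ‖v‖ = r * ‖∑ i, ⟪b i, v⟫ • b i‖ := by rw [b.sum_repr']
    _ ≤ r * ∑ i, |⟪b i, v⟫| := by
      refine mul_le_mul_of_nonneg_left ((norm_sum_le _ _).trans_eq ?_) hr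
      simp only [norm_smul, Real.norm_eq_abs, b.norm_eq_one, mul_one]
    _ = supportFun (zonotope Finset.univ fun i => r • b i) v := by
      simp only [supportFun_zonotope, real_inner_smul_right, abs_mul, abs_of_nonneg hr,
        Finset.mul_sum, real_inner_comm]

variable [FiniteDimensional ℝ E]

theorem exists_abs_supportFun_sub_zonotope_le (hK : IsCompact K) (hK_neg : -K = K) {δ : ℝ}
    (hδ : 0 < δ) :
    ∃ (s : Finset E) (z₁ z₂ : E → E), ∀ v,
      |supportFun K v - (supportFun (zonotope s z₁) v - supportFun (zonotope s z₂) v)| ≤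
        δ * ‖v‖ := by
  let f : C(sphere (0 : E) 1, ℝ) := ⟨fun v => supportFun K v,
    (continuous_supportFun hK).comp continuous_subtype_val⟩
  have hf : f ∈ absInnerClosedSpan E := mem_absInnerClosedSpan_of_even fun v => by
    simp only [f, ContinuousMap.coe_mk, coe_neg_sphere, supportFun_neg_right, hK_neg]
  obtain ⟨g, hg, hfg⟩ := Metric.mem_closure_iff.1 hf δ hδ
  obtain ⟨c, rfl⟩ := Finsupp.mem_span_range_iff_exists_finsupp.1 hg
  refine ⟨c.support, fun y => (c y)⁺ • y, fun y => (c y)⁻ • y, fun v => ?_⟩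
  rw [supportFun_zonotope_posPart_sub_negPart]
  obtain rfl | hv := eq_or_ne v 0
  · have hzero (M : Set E) : supportFun M 0 = 0 := by
      simpa using supportFun_smul_right M le_rfl 0
    simp [hzero]
  let u : sphere (0 : E) 1 := ⟨‖v‖⁻¹ • v, by simp [norm_smul, hv]⟩
  have hvu : v = ‖v‖ • (u : E) := (smul_inv_smul₀ (norm_ne_zero_iff.2 hv) v).symm
  have hu := (ContinuousMap.dist_apply_le_dist u).trans hfg.le
  have hv_homog : supportFun K v - c.sum (fun y a => a * |⟪v, y⟫|) =
      ‖v‖ * (f u - (c.sum fun y a => a • absInner y) u) := by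
    have hinner (y : E) : |⟪v, y⟫| = ‖v‖ * |⟪y, (u : E)⟫| := by
      conv_lhs => rw [hvu, real_inner_smul_left, abs_mul, abs_norm, real_inner_comm]
    have hsupp : supportFun K v = ‖v‖ * f u := by
      conv_lhs => rw [hvu, supportFun_smul_right K (norm_nonneg v)]
      rfl
    rw [hsupp, mul_sub, Finsupp.sum, Finsupp.sum, ContinuousMap.sum_apply, Finset.mul_sum]
    congr 1
    refine Finset.sum_congr rfl fun y _ => ?_
    rw [hinner, ContinuousMap.smul_apply, smul_eq_mul, absInner_apply, mul_left_comm]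
  rw [hv_homog, abs_mul, abs_norm, mul_comm]
  gcongr
  exact hu

theorem exists_add_zonotope_subset (hK : IsCompact K) (hK_conv : Convex ℝ K) (hK₀ : K.Nonempty)
    (hK_neg : -K = K) (hQ : IsCompact Q) (hQ_conv : Convex ℝ Q) (hQ₀ : Q.Nonempty) {δ : ℝ}
    (hδ : 0 < δ) (hδQ : ∀ v, δ * ‖v‖ ≤ supportFun Q v) :
    ∃ (s : Finset E) (z₁ z₂ : E → E), K + zonotope s z₂ ⊆ Q + zonotope s z₁ ∧
      zonotope s z₁ ⊆ K + zonotope s z₂ + Q := by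
  obtain ⟨s, z₁, z₂, hz⟩ := exists_abs_supportFun_sub_zonotope_le hK hK_neg hδ
  have hZ (z : E → E) : IsCompact (zonotope s z) := isCompact_zonotope s z
  have hZ₀ (z : E → E) : (zonotope s z).Nonempty := ⟨0, zero_mem_zonotope s z⟩
  have hKZ := supportFun_add hK hK₀ (hZ z₂) (hZ₀ z₂)
  refine ⟨s, z₁, z₂,
    subset_of_supportFun_le (hQ.add (hZ z₁)).isClosed (hQ_conv.add (convex_zonotope s z₁))
      (hQ₀.add (hZ₀ z₁)) (hK.add (hZ z₂)) fun v => ?_,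
    subset_of_supportFun_le ((hK.add (hZ z₂)).add hQ).isClosed
      ((hK_conv.add (convex_zonotope s z₂)).add hQ_conv) ((hK₀.add (hZ₀ z₂)).add hQ₀) (hZ z₁)
      fun v => ?_⟩
  · rw [hKZ, supportFun_add hQ hQ₀ (hZ z₁) (hZ₀ z₁)]
    linarith [le_of_abs_le (hz v), hδQ v]
  · rw [supportFun_add (hK.add (hZ z₂)) (hK₀.add (hZ₀ z₂)) hQ hQ₀, hKZ]
    linarith [neg_le_of_abs_le (hz v), hδQ v]

end ZonotopeApproximation

section MixedVolume

variable {E : Type*} [NormedAddCommGroup E] [InnerProductSpace ℝ E] [FiniteDimensional ℝ E]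
  [MeasurableSpace E] [BorelSpace E]
  {K L C D : Set E}

theorem volumeQuotient_le_of_subset (hL : IsCompact L) (hD : IsCompact D) (hCD : C ⊆ D)
    (M : Set E) (N : ℕ) : volumeQuotient L C M N ≤ volumeQuotient L D M N := by
  have hvol : volume.real (L + (N : ℝ)⁻¹ • C) ≤ volume.real (L + (N : ℝ)⁻¹ • D) :=
    measureReal_mono (Set.add_subset_add_left (smul_set_mono hCD))
      (hL.add (hD.smul _)).measure_ne_top
  unfold volumeQuotient
  gcongr

theorem volumeQuotient_add_volumeQuotient (L C D M : Set E) (N : ℕ) :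
    volumeQuotient L C D N + volumeQuotient L D M N = volumeQuotient L C M N := by
  unfold volumeQuotient
  ring

theorem sum_segmentIncrement_le_of_zonotope_subset {ι κ : Type*} {s : Finset ι} {t : Finset κ}
    {z₁ z₂ : ι → E} {q : κ → E} (hK : IsCompact K) (hK_conv : Convex ℝ K) (hK₀ : 0 ∈ K)
    (hsub : zonotope s z₁ ⊆ K + zonotope s z₂ + zonotope t q) :
    ∑ i ∈ s, segmentIncrement K (z₁ i) ≤ ∑ i ∈ t, segmentIncrement K (q i) +
      ∑ i ∈ s, segmentIncrement K (z₂ i) + Module.finrank ℝ E * volume.real K := by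
  have hZ := isCompact_zonotope s z₂
  have hKZ₀ : 0 ∈ K + zonotope s z₂ := by
    simpa using Set.add_mem_add hK₀ (zero_mem_zonotope s z₂)
  have hz₁ := tendsto_volumeQuotient_add_zonotope hK hK_conv isCompact_singleton
    (convex_singleton 0) (mem_singleton 0) s z₁
  have hq := tendsto_volumeQuotient_add_zonotope hK hK_conv (hK.add hZ)
    (hK_conv.add (convex_zonotope s z₂)) hKZ₀ t q
  have hz₂ := tendsto_volumeQuotient_add_zonotope hK hK_conv hK hK_conv hK₀ s z₂
  rw [singleton_zero, zero_add] at hz₁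
  refine le_of_tendsto_of_tendsto' hz₁ ((hq.add hz₂).add (tendsto_volumeQuotient_self hK_conv))
    fun N => ?_
  rw [volumeQuotient_add_volumeQuotient, volumeQuotient_add_volumeQuotient]
  exact volumeQuotient_le_of_subset hK ((hK.add hZ).add (isCompact_zonotope t q)) hsub 0 N

theorem exists_tendsto_volumeQuotient_le {ι κ : Type*} {s : Finset ι} {t : Finset κ}
    {z₁ z₂ : ι → E} {q : κ → E} (hL : IsCompact L) (hL_conv : Convex ℝ L) (hK : IsCompact K)
    (hK_conv : Convex ℝ K) (hK₀ : 0 ∈ K)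
    (hsub : K + zonotope s z₂ ⊆ zonotope t q + zonotope s z₁) :
    ∃ u : ℕ → ℝ, (∀ N, volumeQuotient L K 0 N ≤ u N) ∧ Tendsto u atTop
      (𝓝 (∑ i ∈ s, segmentIncrement L (z₁ i) + ∑ i ∈ t, segmentIncrement L (q i) -
        ∑ i ∈ s, segmentIncrement L (z₂ i))) := by
  have hQ := isCompact_zonotope t q
  have hz₁ := tendsto_volumeQuotient_add_zonotope hL hL_conv hQ (convex_zonotope t q)
    (zero_mem_zonotope t q) s z₁
  have hq := tendsto_volumeQuotient_add_zonotope hL hL_conv isCompact_singleton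
    (convex_singleton 0) (mem_singleton 0) t q
  have hz₂ := tendsto_volumeQuotient_add_zonotope hL hL_conv hK hK_conv hK₀ s z₂
  rw [singleton_zero, zero_add] at hq
  refine ⟨_, fun N => ?_, (hz₁.add hq).sub hz₂⟩
  rw [le_sub_iff_add_le', volumeQuotient_add_volumeQuotient, volumeQuotient_add_volumeQuotient]
  exact volumeQuotient_le_of_subset hL (hQ.add (isCompact_zonotope s z₁)) hsub 0 N

theorem eventually_volumeQuotient_lt (hL : IsCompact L) (hL_conv : Convex ℝ L) (hK : IsCompact K)
    (hK_conv : Convex ℝ K) (hK₀ : 0 ∈ K) (hK_neg : -K = K)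
    (hLK : segmentIncrement L = segmentIncrement K) {r : ℝ}
    (hr : Module.finrank ℝ E * volume.real K < r) :
    ∀ᶠ N in atTop, volumeQuotient L K 0 N < r := by
  let b := stdOrthonormalBasis ℝ E
  set c := ∑ i, segmentIncrement K (b i)
  have hlim : Tendsto (fun m : ℕ => 2 * ((m : ℝ)⁻¹ * c) + Module.finrank ℝ E * volume.real K) atTop
      (𝓝 (Module.finrank ℝ E * volume.real K)) := by
    simpa using ((tendsto_inv_atTop_nhds_zero_nat.mul_const c).const_mul 2).add_const
      (Module.finrank ℝ E * volume.real K)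
  obtain ⟨m, hmr, hm⟩ := ((hlim.eventually_lt_const hr).and (eventually_ne_atTop 0)).exists
  have hm_pos : 0 < (m : ℝ)⁻¹ := inv_pos.2 (Nat.cast_pos.2 (Nat.pos_of_ne_zero hm))
  let q := fun i => (m : ℝ)⁻¹ • b i
  have hq : ∑ i, segmentIncrement K (q i) = (m : ℝ)⁻¹ * c := by
    rw [Finset.mul_sum]
    exact Finset.sum_congr rfl fun i _ => segmentIncrement_inv_natCast_smul hK hK_conv (b i) hm
  obtain ⟨s, z₁, z₂, hupper, hlower⟩ := exists_add_zonotope_subset hK hK_conv ⟨0, hK₀⟩ hK_neg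
    (isCompact_zonotope Finset.univ q) (convex_zonotope _ q) ⟨0, zero_mem_zonotope _ q⟩ hm_pos
    (mul_norm_le_supportFun_zonotope b hm_pos.le)
  obtain ⟨u, hu, hu_lim⟩ := exists_tendsto_volumeQuotient_le hL hL_conv hK hK_conv hK₀ hupper
  have hsum := sum_segmentIncrement_le_of_zonotope_subset hK hK_conv hK₀ hlower
  rw [hLK, hq] at hu_lim
  rw [hq] at hsum
  have hlt : ∑ i ∈ s, segmentIncrement K (z₁ i) + (m : ℝ)⁻¹ * c -
      ∑ i ∈ s, segmentIncrement K (z₂ i) < r := by linarith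
  filter_upwards [hu_lim.eventually_lt_const hlt] with N hN
  exact (hu N).trans_lt hN

end MixedVolume

section Midpoint

variable {E : Type*} [NormedAddCommGroup E] [InnerProductSpace ℝ E] [FiniteDimensional ℝ E]
  [MeasurableSpace E] [BorelSpace E]
  {K L : Set E}

/- `L + tK` is `(1 + t)` times a convex combination of `L` and the midpoint `L/2 + K/2`. -/
theorem mul_rpow_le_volume_real_add_smul (hL : IsCompact L) (hL_conv : Convex ℝ L)
    (hK : IsCompact K) {t : ℝ} (ht₀ : 0 < t) (ht₁ : t < 1) :
    (1 + t) ^ Module.finrank ℝ E * (volume.real L ^ ((1 - t) / (1 + t)) *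
      volume.real ((1 / 2 : ℝ) • L + (1 / 2 : ℝ) • K) ^ (2 * t / (1 + t))) ≤
      volume.real (L + t • K) := by
  have ht : 0 < 1 + t := by linarith
  have hset : L + t • K = (1 + t) • (((1 - t) / (1 + t)) • L +
      (2 * t / (1 + t)) • ((1 / 2 : ℝ) • L + (1 / 2 : ℝ) • K)) := by
    have hhalf : 2 * t * (1 / 2) = t := by ring
    rw [smul_add, smul_smul, smul_smul, mul_div_cancel₀ _ ht.ne', mul_div_cancel₀ _ ht.ne',
      smul_add, smul_smul, smul_smul, hhalf, ← add_assoc,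
      ← hL_conv.add_smul (by linarith) ht₀.le, sub_add_cancel, one_smul]
  rw [hset, volume_real_smul_of_nonneg ht.le]
  gcongr
  exact volume_rpow_mul_volume_rpow_le (div_pos (by linarith) ht) (by positivity)
    (by field_simp; ring) hL ((hL.smul _).add (hK.smul _))

theorem mul_log_le_volume_real_add_smul_sub (hL : IsCompact L) (hL_conv : Convex ℝ L)
    (hK : IsCompact K) (hV : 0 < volume.real L)
    (hW : 0 < volume.real ((1 / 2 : ℝ) • L + (1 / 2 : ℝ) • K)) {t : ℝ} (ht₀ : 0 < t)
    (ht₁ : t < 1) :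
    volume.real L * (Module.finrank ℝ E * Real.log (1 + t) + 2 * t / (1 + t) *
      Real.log (volume.real ((1 / 2 : ℝ) • L + (1 / 2 : ℝ) • K) / volume.real L)) ≤
      volume.real (L + t • K) - volume.real L := by
  have hBM := mul_rpow_le_volume_real_add_smul hL hL_conv hK ht₀ ht₁
  set V := volume.real L
  set W := volume.real ((1 / 2 : ℝ) • L + (1 / 2 : ℝ) • K)
  have hexp : (1 - t) / (1 + t) = 1 - 2 * t / (1 + t) := by
    rw [eq_sub_iff_add_eq, ← add_div, sub_add_eq_add_sub, div_eq_one_iff_eq (by positivity)]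
    ring
  have hratio : (1 + t) ^ Module.finrank ℝ E * (W / V) ^ (2 * t / (1 + t)) ≤
      volume.real (L + t • K) / V := by
    rw [le_div_iff₀ hV, Real.div_rpow hW.le hV.le]
    refine le_of_eq_of_le ?_ hBM
    rw [hexp, Real.rpow_sub hV, Real.rpow_one]
    ring
  have hlog := Real.log_le_sub_one_of_pos
    (show 0 < (1 + t) ^ Module.finrank ℝ E * (W / V) ^ (2 * t / (1 + t)) by positivity)
  rw [Real.log_mul (by positivity) (by positivity), Real.log_pow,
    Real.log_rpow (div_pos hW hV)] at hlog
  calc _ ≤ V * (volume.real (L + t • K) / V - 1) := by gcongr; linarith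
    _ = volume.real (L + t • K) - V := by rw [mul_sub, mul_div_cancel₀ _ hV.ne', mul_one]

theorem le_of_eventually_volumeQuotient_lt (hL : IsCompact L) (hL_conv : Convex ℝ L)
    (hK : IsCompact K) (hV : 0 < volume.real L)
    (hW : 0 < volume.real ((1 / 2 : ℝ) • L + (1 / 2 : ℝ) • K)) {r : ℝ}
    (hr : ∀ᶠ N in atTop, volumeQuotient L K 0 N < r) :
    volume.real L * (Module.finrank ℝ E +
      2 * Real.log (volume.real ((1 / 2 : ℝ) • L + (1 / 2 : ℝ) • K) / volume.real L)) ≤ r := by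
  set V := volume.real L
  set W := volume.real ((1 / 2 : ℝ) • L + (1 / 2 : ℝ) • K)
  let g := fun t : ℝ => Module.finrank ℝ E * Real.log (1 + t) + 2 * t / (1 + t) * Real.log (W / V)
  have hg : HasDerivAt g (Module.finrank ℝ E + 2 * Real.log (W / V)) 0 := by
    have hadd := (hasDerivAt_id (0 : ℝ)).const_add 1
    have hdiv := ((hasDerivAt_id (0 : ℝ)).const_mul 2).fun_div hadd (by simp)
    simpa using ((hadd.log (by simp)).const_mul (Module.finrank ℝ E : ℝ)).fun_add
      (hdiv.mul_const (Real.log (W / V)))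
  refine le_of_tendsto ((tendsto_natCast_mul_sub_of_hasDerivAt hg).const_mul V) ?_
  filter_upwards [hr, eventually_gt_atTop 1] with N hNr hN
  have hN₀ : (0 : ℝ) < (N : ℝ)⁻¹ := inv_pos.2 (Nat.cast_pos.2 (zero_lt_one.trans hN))
  have hN₁ : (N : ℝ)⁻¹ < 1 := inv_lt_one_of_one_lt₀ (Nat.one_lt_cast.2 hN)
  have hgN : V * g (N : ℝ)⁻¹ ≤ volume.real (L + (N : ℝ)⁻¹ • K) - V :=
    mul_log_le_volume_real_add_smul_sub hL hL_conv hK hV hW hN₀ hN₁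
  calc V * (N * (g (N : ℝ)⁻¹ - g 0)) = N * (V * g (N : ℝ)⁻¹) := by
        simp only [g, add_zero, Real.log_one, mul_zero, zero_div, zero_mul, sub_zero,
          mul_left_comm]
    _ ≤ N * (volume.real (L + (N : ℝ)⁻¹ • K) - V) := by gcongr
    _ = volumeQuotient L K 0 N := by rw [volumeQuotient, smul_zero, add_zero]
    _ ≤ r := hNr.le

theorem volume_real_half_smul_add_half_smul_eq (hL : IsCompact L) (hL_conv : Convex ℝ L)
    (hK : IsCompact K) (hV : 0 < volume.real L) (hKV : volume.real K = volume.real L)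
    (hquot : ∀ r, Module.finrank ℝ E * volume.real K < r →
      ∀ᶠ N in atTop, volumeQuotient L K 0 N < r) :
    volume.real ((1 / 2 : ℝ) • L + (1 / 2 : ℝ) • K) = volume.real L := by
  have hVW : volume.real L ≤ volume.real ((1 / 2 : ℝ) • L + (1 / 2 : ℝ) • K) := by
    have hhalf : (0 : ℝ) < 1 / 2 := by norm_num
    have h := volume_rpow_mul_volume_rpow_le hhalf hhalf (add_halves 1) hL hK
    rwa [hKV, ← Real.rpow_add hV, add_halves, Real.rpow_one] at h
  have hW := hV.trans_le hVW
  have hderiv := le_of_forall_gt_imp_ge_of_dense fun r hr =>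
    le_of_eventually_volumeQuotient_lt hL hL_conv hK hV hW (hquot r hr)
  refine le_antisymm ?_ hVW
  have hlog : Real.log (volume.real ((1 / 2 : ℝ) • L + (1 / 2 : ℝ) • K) / volume.real L) ≤ 0 := by
    rw [hKV] at hderiv
    nlinarith
  rwa [← div_le_one hV, ← Real.log_nonpos_iff (div_pos hW hV).le]

end Midpoint

section ConvexHullFn

variable {n : ℕ} {K L : Set (EuclideanSpace ℝ (Fin n))}

theorem IsConvexBody.vadd (hK : IsConvexBody K) (x : EuclideanSpace ℝ (Fin n)) :
    IsConvexBody (x +ᵥ K) :=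
  ⟨hK.1.vadd x, hK.2.1.vadd x, by simpa only [interior_vadd] using hK.2.2.vadd_set⟩

theorem IsConvexBody.neg (hK : IsConvexBody K) : IsConvexBody (-K) :=
  ⟨hK.1.neg, hK.2.1.neg, by
    rw [← image_neg_eq_neg, ← Homeomorph.coe_neg, ← Homeomorph.image_interior]
    exact hK.2.2.image _⟩

theorem IsConvexBody.zero_mem_of_neg_eq (hK : IsConvexBody K) (hK_neg : -K = K) : 0 ∈ K := by
  obtain ⟨x, hx⟩ := hK.2.2.mono interior_subset
  have hnx : -x ∈ K := by rwa [← Set.mem_neg, hK_neg]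
  exact hK.2.1.segment_subset hnx hx (zero_mem_segment_neg x)

theorem convexHullFn_eq (hK : Convex ℝ K) (t : EuclideanSpace ℝ (Fin n)) :
    convexHullFn K t = volume.real (K + segment ℝ 0 t) := by
  have hunion : K ∪ (t +ᵥ K) = K + {0, t} := by
    rw [insert_eq, add_union, singleton_zero, add_zero, add_comm K, ← vadd_eq_add, singleton_vadd]
  rw [convexHullFn, hunion, convexHull_add, hK.convexHull_eq, convexHull_pair, measureReal_def]

theorem convexHullFn_zero (hK : Convex ℝ K) : convexHullFn K 0 = volume.real K := by
  rw [convexHullFn_eq hK, segment_same, singleton_zero, add_zero]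

theorem segmentIncrement_eq_convexHullFn_sub (hK : Convex ℝ K)
    (z : EuclideanSpace ℝ (Fin n)) :
    segmentIncrement K z = convexHullFn K ((2 : ℝ) • z) - convexHullFn K 0 := by
  rw [segmentIncrement_eq, convexHullFn_eq hK, convexHullFn_zero hK]

theorem convexHullFn_vadd (x : EuclideanSpace ℝ (Fin n)) (K : Set (EuclideanSpace ℝ (Fin n))) :
    convexHullFn (x +ᵥ K) = convexHullFn K := by
  ext t
  rw [convexHullFn, vadd_comm, ← vadd_set_union, convexHull_vadd, measure_vadd, convexHullFn]

theorem convexHullFn_neg (K : Set (EuclideanSpace ℝ (Fin n))) :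
    convexHullFn (-K) = convexHullFn K := by
  ext t
  have hneg : -K ∪ (t +ᵥ -K) = t +ᵥ -(K ∪ (t +ᵥ K)) := by
    ext x
    simp only [mem_union, Set.mem_neg, mem_vadd_set_iff_neg_vadd_mem, vadd_eq_add, neg_add_rev,
      neg_neg, neg_add_cancel_comm_assoc]
    exact or_comm
  rw [convexHullFn, hneg, convexHull_vadd, convexHull_neg, measure_vadd, Measure.measure_neg,
    convexHullFn]

theorem exists_eq_vadd_of_convexHullFn_eq (hK : IsConvexBody K) (hK_neg : -K = K)
    (hL : IsConvexBody L) (hLK : convexHullFn L = convexHullFn K) :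
    ∃ x : EuclideanSpace ℝ (Fin n), L = x +ᵥ K := by
  have hKV : volume.real K = volume.real L := by
    rw [← convexHullFn_zero hK.2.1, ← convexHullFn_zero hL.2.1, hLK]
  have hincr : segmentIncrement L = segmentIncrement K := by
    ext z
    rw [segmentIncrement_eq_convexHullFn_sub hL.2.1, segmentIncrement_eq_convexHullFn_sub hK.2.1,
      hLK]
  have hmid := volume_real_half_smul_add_half_smul_eq hL.1 hL.2.1 hK.1
    (volume_real_pos hL.1 hL.2.2) hKV fun _ =>
      eventually_volumeQuotient_lt hL.1 hL.2.1 hK.1 hK.2.1 (hK.zero_mem_of_neg_eq hK_neg) hK_neg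
        hincr
  exact exists_eq_vadd_of_volume_eq one_half_pos one_half_pos (add_halves 1) hL.1 hL.2.1 hL.2.2
    hK.1 hK.2.1 hK.2.2 hKV hmid

end ConvexHullFn

theorem stmt2 {n : ℕ} (hn : 2 ≤ n) (K : Set (EuclideanSpace ℝ (Fin n)))
    (hK : IsConvexBody K) :
    (∃ c : EuclideanSpace ℝ (Fin n), K = ((2 : ℝ) • c) +ᵥ (-K)) ↔
      (∀ L : Set (EuclideanSpace ℝ (Fin n)), IsConvexBody L →
        convexHullFn L = convexHullFn K → ∃ x : EuclideanSpace ℝ (Fin n), L = x +ᵥ K) := by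
  constructor
  · rintro ⟨c, hc⟩ L hL hLK
    have hK_neg : -(-c +ᵥ K) = -c +ᵥ K := by
      conv_rhs => rw [hc, vadd_vadd]
      rw [← singleton_vadd, vadd_eq_add, neg_add, neg_singleton, neg_neg, ← vadd_eq_add,
        singleton_vadd, two_smul, neg_add_cancel_left]
    obtain ⟨x, hx⟩ := exists_eq_vadd_of_convexHullFn_eq (hK.vadd (-c)) hK_neg hL
      (hLK.trans (convexHullFn_vadd _ K).symm)
    exact ⟨x + -c, by rw [hx, vadd_vadd]⟩
  · intro h
    obtain ⟨x, hx⟩ := h (-K) hK.neg (convexHullFn_neg K)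
    refine ⟨(1 / 2 : ℝ) • -x, ?_⟩
    rw [hx, vadd_vadd, smul_smul, mul_one_div_cancel two_ne_zero, one_smul, neg_add_cancel,
      zero_vadd]
end

section
/- Let K ⊂ ℝ² be a plane convex body of constant width, i.e., such that the difference body K − K is a Euclidean disk. Then K satisfies the translative constant volume property. -/
open MeasureTheory Set Pointwise Metric

/-- Two sets touch each other if they intersect and their interiors are disjoint. -/
def Touching {n : ℕ} (A B : Set (EuclideanSpace ℝ (Fin n))) : Prop :=
  (A ∩ B).Nonempty ∧ interior A ∩ interior B = ∅

/-- The translative constant volume property. -/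
def TCVP {n : ℕ} (K : Set (EuclideanSpace ℝ (Fin n))) : Prop :=
  ∃ c : ℝ, ∀ v w : EuclideanSpace ℝ (Fin n), Touching (v +ᵥ K) (w +ᵥ K) →
    (volume (convexHull ℝ ((v +ᵥ K) ∪ (w +ᵥ K)))).toReal = c

/-!
The convex hull of `v + K` and `w + K` is a translate of `K + [0, t]` with `t = w - v`. Every line
parallel to `t` that meets `K` does so in a segment, which `[0, t]` prolongs by `‖t‖`; by Fubini the
volume grows by `‖t‖` times the measure of the projection of `K` to `tᗮ`.

Let `K - K` be the closed ball of radius `r`. The translates intersect iff `t ∈ K - K`, and their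
interiors intersect iff `t` is in `interior K - interior K = interior (K - K)`, so touching forces
`‖t‖ = r`. In the plane the projection of `K` to `tᗮ` is a segment whose difference set is again a
ball of radius `r`, so its length is `r` and the hull has area `vol K + r ^ 2`.
-/

theorem nonempty_vadd_inter_vadd_iff {G : Type*} [AddCommGroup G] {A B : Set G} {v w : G} :
    ((v +ᵥ A) ∩ (w +ᵥ B)).Nonempty ↔ w - v ∈ A - B := by
  constructor
  · rintro ⟨_, ⟨a, ha, rfl⟩, b, hb, hab⟩
    exact ⟨a, ha, b, hb, sub_eq_sub_iff_add_eq_add.2 (by simpa [add_comm] using hab.symm)⟩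
  · rintro ⟨a, ha, b, hb, hab⟩
    exact ⟨v +ᵥ a, ⟨a, ha, rfl⟩, b, hb, by
      simpa [add_comm] using (sub_eq_sub_iff_add_eq_add.1 hab).symm⟩

section TopologicalVectorSpace

variable {𝕜 E : Type*} [Field 𝕜] [LinearOrder 𝕜] [IsStrictOrderedRing 𝕜] [AddCommGroup E]
  [Module 𝕜 E]

theorem convexHull_vadd_union_vadd {K : Set E} (hK : Convex 𝕜 K) (v w : E) :
    convexHull 𝕜 ((v +ᵥ K) ∪ (w +ᵥ K)) = v +ᵥ (K + segment 𝕜 0 (w - v)) := by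
  have h_union : (v +ᵥ K) ∪ (w +ᵥ K) = {v, w} + K := by
    rw [insert_eq, union_add, singleton_add, singleton_add]
    rfl
  have h_segment : segment 𝕜 v w = v +ᵥ segment 𝕜 0 (w - v) := by
    rw [vadd_segment, vadd_eq_add, vadd_eq_add, add_zero, add_sub_cancel]
  rw [h_union, convexHull_add, convexHull_pair, hK.convexHull_eq, h_segment, vadd_add_assoc,
    add_comm K]

variable [TopologicalSpace 𝕜] [OrderTopology 𝕜] [TopologicalSpace E] [IsTopologicalAddGroup E]
  [ContinuousSMul 𝕜 E]

theorem interior_sub_of_convex {A B : Set E} (hA : Convex 𝕜 A) (hB : Convex 𝕜 B)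
    (hA' : (interior A).Nonempty) (hB' : (interior B).Nonempty) :
    interior (A - B) = interior A - interior B := by
  set U := interior A - interior B
  have hU_open : IsOpen U := isOpen_interior.sub_left
  have hU_nonempty : (interior U).Nonempty := hU_open.interior_eq.symm ▸ hA'.sub hB'
  have h_subset : A - B ⊆ closure U := by
    rintro _ ⟨a, ha, b, hb, rfl⟩
    have ha' : a ∈ closure (interior A) :=
      (hA.closure_interior_eq_closure_of_nonempty_interior hA').symm ▸ subset_closure ha
    have hb' : b ∈ closure (interior B) :=
      (hB.closure_interior_eq_closure_of_nonempty_interior hB').symm ▸ subset_closure hb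
    exact map_mem_closure₂ continuous_sub ha' hb' fun _ hx _ hy => sub_mem_sub hx hy
  refine (interior_mono h_subset).trans ?_ |>.antisymm subset_interior_sub
  rw [(hA.interior.sub hB.interior).interior_closure_eq_interior_of_nonempty_interior hU_nonempty,
    hU_open.interior_eq]

end TopologicalVectorSpace

theorem norm_sub_eq_of_touching {E : Type*} [NormedAddCommGroup E] [NormedSpace ℝ E]
    {K : Set E} (hK : Convex ℝ K) (hK' : (interior K).Nonempty) {r : ℝ} (hr : r ≠ 0)
    (h : K - K = closedBall 0 r) {v w : E} (h_inter : ((v +ᵥ K) ∩ (w +ᵥ K)).Nonempty)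
    (h_disj : Disjoint (interior (v +ᵥ K)) (interior (w +ᵥ K))) : ‖w - v‖ = r := by
  refine le_antisymm ?_ (not_lt.1 fun h_lt => ?_)
  · rwa [nonempty_vadd_inter_vadd_iff, h, mem_closedBall_zero_iff] at h_inter
  · rw [← mem_ball_zero_iff, ← interior_closedBall _ hr, ← h, interior_sub_of_convex hK hK hK' hK',
      ← nonempty_vadd_inter_vadd_iff, ← interior_vadd, ← interior_vadd] at h_lt
    exact h_lt.ne_empty h_disj.inter_eq

section Real

theorem exists_eq_Icc_of_isCompact_of_convex {S : Set ℝ} (hS : IsCompact S) (hS' : Convex ℝ S)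
    (hne : S.Nonempty) : ∃ a b, a ≤ b ∧ S = Icc a b :=
  ⟨sInf S, sSup S, Real.sInf_le_sSup S hS.bddBelow hS.bddAbove,
    eq_Icc_of_connected_compact ⟨hne, hS'.isPreconnected⟩ hS⟩

theorem volume_add_of_convex {A B : Set ℝ} (hA : IsCompact A) (hA' : Convex ℝ A)
    (hA_ne : A.Nonempty) (hB : IsCompact B) (hB' : Convex ℝ B) (hB_ne : B.Nonempty) :
    volume (A + B) = volume A + volume B := by
  obtain ⟨a, b, hab, rfl⟩ := exists_eq_Icc_of_isCompact_of_convex hA hA' hA_ne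
  obtain ⟨c, d, hcd, rfl⟩ := exists_eq_Icc_of_isCompact_of_convex hB hB' hB_ne
  rw [Icc_add_Icc hab hcd, Real.volume_Icc, Real.volume_Icc, Real.volume_Icc,
    ← ENNReal.ofReal_add (sub_nonneg.2 hab) (sub_nonneg.2 hcd), add_sub_add_comm]

theorem volume_eq_of_sub_self_eq_closedBall {S : Set ℝ} (hS : IsCompact S) (hS' : Convex ℝ S)
    {r : ℝ} (hr : 0 ≤ r) (h : S - S = closedBall 0 r) : volume S = ENNReal.ofReal r := by
  have h_mem : r ∈ S - S := by simp [h, abs_of_nonneg hr]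
  have h_nonempty : S.Nonempty := Nonempty.of_sub_left ⟨r, h_mem⟩
  obtain ⟨a, b, hab, rfl⟩ := exists_eq_Icc_of_isCompact_of_convex hS hS' h_nonempty
  have h_le : b - a ≤ r := by
    have h_sub : b - a ∈ Icc a b - Icc a b := sub_mem_sub (right_mem_Icc.2 hab) (left_mem_Icc.2 hab)
    rw [h, mem_closedBall_zero_iff] at h_sub
    exact (le_abs_self _).trans h_sub
  obtain ⟨x, hx, y, hy, hxy⟩ := h_mem
  rw [Real.volume_Icc, h_le.antisymm (hxy ▸ sub_le_sub hx.2 hy.1)]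

end Real

section Cavalieri

theorem preimage_mk_add_prod_singleton_zero {M N : Type*} [Add M] [AddZeroClass N]
    (L : Set (M × N)) (A : Set M) (y : N) :
    (fun x => (x, y)) ⁻¹' (L + A ×ˢ {0}) = (fun x => (x, y)) ⁻¹' L + A := by
  ext x
  constructor
  · rintro ⟨⟨a, b⟩, hab, ⟨e, _⟩, ⟨he, rfl⟩, h⟩
    obtain ⟨rfl, rfl⟩ : a + e = x ∧ b = y := by simpa using h
    exact ⟨a, hab, e, he, rfl⟩
  · rintro ⟨a, ha, e, he, rfl⟩
    exact ⟨(a, y), ha, (e, 0), ⟨he, rfl⟩, by simp⟩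

theorem measure_prod_add_prod_singleton_zero {F : Type*} [AddCommGroup F] [Module ℝ F]
    [TopologicalSpace F] [ContinuousAdd F] [T2Space F] [MeasurableSpace F] [OpensMeasurableSpace F]
    (ν : Measure F) [SFinite ν] {L : Set (ℝ × F)} (hL : IsCompact L) (hL' : Convex ℝ L)
    {A : Set ℝ} (hA : IsCompact A) (hA' : Convex ℝ A) (hA_ne : A.Nonempty) :
    (volume.prod ν) (L + A ×ˢ {0}) = (volume.prod ν) L + volume A * ν (Prod.snd '' L) := by
  have h_snd : MeasurableSet (Prod.snd '' L) := (hL.image continuous_snd).measurableSet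
  rw [Measure.prod_apply_symm (hL.add (hA.prod isCompact_singleton)).measurableSet,
    Measure.prod_apply_symm hL.measurableSet, ← lintegral_indicator_const h_snd,
    ← lintegral_add_right _ (measurable_const.indicator h_snd)]
  refine lintegral_congr fun y => ?_
  rw [preimage_mk_add_prod_singleton_zero]
  by_cases hy : y ∈ Prod.snd '' L
  · have h_compact : IsCompact ((fun x : ℝ => (x, y)) ⁻¹' L) :=
      (hL.image continuous_fst).of_isClosed_subset (hL.isClosed.preimage (by fun_prop))
        fun _ hx => ⟨_, hx, rfl⟩
    have h_convex : Convex ℝ ((fun x : ℝ => (x, y)) ⁻¹' L) :=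
      hL'.affine_preimage ((AffineMap.id ℝ ℝ).prod (AffineMap.const ℝ ℝ y))
    have h_nonempty : ((fun x : ℝ => (x, y)) ⁻¹' L).Nonempty := by
      obtain ⟨⟨x, _⟩, hx, rfl⟩ := hy
      exact ⟨x, hx⟩
    rw [indicator_of_mem hy,
      volume_add_of_convex h_compact h_convex h_nonempty hA hA' hA_ne]
  · have h_empty : (fun x : ℝ => (x, y)) ⁻¹' L = ∅ :=
      eq_empty_of_forall_notMem fun x hx => hy ⟨_, hx, rfl⟩
    rw [indicator_of_notMem hy, h_empty, empty_add, add_zero]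

end Cavalieri

section InnerProductSpace

variable {E : Type*} [NormedAddCommGroup E] [InnerProductSpace ℝ E]

theorem orthogonalProjectionOnto_image_closedBall_zero (U : Submodule ℝ E)
    [U.HasOrthogonalProjection] (r : ℝ) :
    U.orthogonalProjectionOnto '' closedBall 0 r = closedBall 0 r := by
  apply Subset.antisymm
  · rintro _ ⟨x, hx, rfl⟩
    rw [mem_closedBall_zero_iff] at hx ⊢
    exact (U.norm_orthogonalProjectionOnto_apply_le x).trans hx
  · exact fun y hy => ⟨y, by simpa using hy, U.orthogonalProjectionOnto_mem_subspace_eq_self y⟩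

/-- Orthogonal coordinates adapted to a unit vector `u`: a point is sent to its signed length along
`u` together with its projection to the hyperplane `uᗮ`. -/
noncomputable def prodOrthogonalSpanSingleton (u : E) (hu : ‖u‖ = 1) :
    E ≃L[ℝ] ℝ × (ℝ ∙ u)ᗮ :=
  (ℝ ∙ u).orthogonalDecomposition.toContinuousLinearEquiv.trans <|
    (WithLp.prodContinuousLinearEquiv 2 ℝ (ℝ ∙ u) (ℝ ∙ u)ᗮ).trans <|
      (LinearIsometryEquiv.toSpanUnitSingleton u hu).symm.toContinuousLinearEquiv.prodCongr
        (.refl ℝ (ℝ ∙ u)ᗮ)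

theorem snd_prodOrthogonalSpanSingleton (u : E) (hu : ‖u‖ = 1) (x : E) :
    (prodOrthogonalSpanSingleton u hu x).2 = (ℝ ∙ u)ᗮ.orthogonalProjectionOnto x := by
  simp [prodOrthogonalSpanSingleton]

theorem prodOrthogonalSpanSingleton_smul (u : E) (hu : ‖u‖ = 1) (d : ℝ) :
    prodOrthogonalSpanSingleton u hu (d • u) = (d, 0) := by
  rw [← ContinuousLinearEquiv.eq_symm_apply]
  simp [prodOrthogonalSpanSingleton]

theorem image_segment_prodOrthogonalSpanSingleton (u : E) (hu : ‖u‖ = 1) {d : ℝ} (hd : 0 ≤ d) :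
    prodOrthogonalSpanSingleton u hu '' segment ℝ 0 (d • u) = Icc 0 d ×ˢ {0} := by
  let e := prodOrthogonalSpanSingleton u hu
  rw [prod_singleton, ← segment_eq_Icc hd, Prod.image_mk_segment_left, Prod.mk_zero_zero,
    ← prodOrthogonalSpanSingleton_smul u hu d]
  simpa using image_segment ℝ (e : E →ₗ[ℝ] ℝ × (ℝ ∙ u)ᗮ).toAffineMap 0 (d • u)

variable [FiniteDimensional ℝ E] [MeasurableSpace E] [BorelSpace E]

theorem measurePreserving_prodOrthogonalSpanSingleton (u : E) (hu : ‖u‖ = 1) :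
    MeasurePreserving (prodOrthogonalSpanSingleton u hu) volume
      (volume.prod (volume : Measure (ℝ ∙ u)ᗮ)) :=
  ((LinearIsometryEquiv.toSpanUnitSingleton u hu).symm.measurePreserving.prod (.id volume)).comp <|
    (WithLp.volume_preserving_ofLp (ℝ ∙ u) (ℝ ∙ u)ᗮ).comp
      (ℝ ∙ u).orthogonalDecomposition.measurePreserving

theorem volume_eq_prod_image_prodOrthogonalSpanSingleton (u : E) (hu : ‖u‖ = 1) (S : Set E) :
    volume S =
      (volume.prod (volume : Measure (ℝ ∙ u)ᗮ)) (prodOrthogonalSpanSingleton u hu '' S) := by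
  let e := prodOrthogonalSpanSingleton u hu
  rw [← (measurePreserving_prodOrthogonalSpanSingleton u hu).measure_preimage_emb
    e.toHomeomorph.measurableEmbedding, e.injective.preimage_image]

theorem volume_add_segment_smul {K : Set E} (hK : IsCompact K) (hK' : Convex ℝ K) {u : E}
    (hu : ‖u‖ = 1) {d : ℝ} (hd : 0 ≤ d) :
    volume (K + segment ℝ 0 (d • u)) =
      volume K + ENNReal.ofReal d * volume ((ℝ ∙ u)ᗮ.orthogonalProjectionOnto '' K) := by
  let e := prodOrthogonalSpanSingleton u hu
  have h_convex : Convex ℝ (e '' K) := hK'.linear_image (e : E →ₗ[ℝ] ℝ × (ℝ ∙ u)ᗮ)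
  have h_snd : Prod.snd '' (e '' K) = (ℝ ∙ u)ᗮ.orthogonalProjectionOnto '' K := by
    simp only [image_image, e, snd_prodOrthogonalSpanSingleton]
  rw [volume_eq_prod_image_prodOrthogonalSpanSingleton u hu, image_add,
    image_segment_prodOrthogonalSpanSingleton u hu hd,
    measure_prod_add_prod_singleton_zero volume (hK.image e.continuous) h_convex isCompact_Icc
      (convex_Icc 0 d) (nonempty_Icc.2 hd),
    h_snd, ← volume_eq_prod_image_prodOrthogonalSpanSingleton, Real.volume_Icc, sub_zero]

theorem volume_add_segment {K : Set E} (hK : IsCompact K) (hK' : Convex ℝ K) (t : E) :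
    volume (K + segment ℝ 0 t) =
      volume K + ‖t‖ₑ * volume ((ℝ ∙ t)ᗮ.orthogonalProjectionOnto '' K) := by
  rcases eq_or_ne t 0 with rfl | ht
  · simp
  obtain ⟨u, hu, ht_smul⟩ : ∃ u : E, ‖u‖ = 1 ∧ t = ‖t‖ • u :=
    ⟨‖t‖⁻¹ • t, by simp [norm_smul, ht], by simp [ht]⟩
  have h_span : (ℝ ∙ t) = ℝ ∙ u := by
    rw [ht_smul]
    exact Submodule.span_singleton_smul_eq (by simpa using ht) u
  -- The measure space `(ℝ ∙ t)ᗮ` depends on the span, which therefore cannot be rewritten in place.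
  suffices ∀ U : Submodule ℝ E, U = ℝ ∙ u → volume (K + segment ℝ 0 t) =
      volume K + ‖t‖ₑ * volume (Uᗮ.orthogonalProjectionOnto '' K) from this _ h_span
  rintro _ rfl
  have h_volume := volume_add_segment_smul hK hK' hu (norm_nonneg t)
  rwa [← ht_smul, ofReal_norm] at h_volume

theorem volume_convexHull_vadd_union_vadd {K : Set E} (hK : IsCompact K) (hK' : Convex ℝ K)
    (v w : E) :
    volume (convexHull ℝ ((v +ᵥ K) ∪ (w +ᵥ K))) =
      volume K + ‖w - v‖ₑ * volume ((ℝ ∙ (w - v))ᗮ.orthogonalProjectionOnto '' K) := by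
  rw [convexHull_vadd_union_vadd hK', measure_vadd, volume_add_segment hK hK']

theorem volume_eq_of_sub_self_eq_closedBall_of_finrank_eq_one (hE : Module.finrank ℝ E = 1)
    {S : Set E} (hS : IsCompact S) (hS' : Convex ℝ S) {r : ℝ} (hr : 0 ≤ r)
    (h : S - S = closedBall 0 r) : volume S = ENNReal.ofReal r := by
  have : Nontrivial E := Module.nontrivial_of_finrank_pos (R := ℝ) (by lia)
  obtain ⟨u, hu⟩ := exists_norm_eq E zero_le_one
  let f : E ≃ₗᵢ[ℝ] ℝ :=
    ((LinearIsometry.toSpanSingleton ℝ E hu).toLinearIsometryEquiv (by simp [hE])).symm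
  have h_image : f '' S - f '' S = closedBall 0 r := by
    rw [← image_sub, h, f.image_closedBall, map_zero]
  rw [← volume_eq_of_sub_self_eq_closedBall (hS.image f.continuous)
    (hS'.linear_image (f : E →ₗ[ℝ] ℝ)) hr h_image,
    ← f.measurePreserving.measure_preimage_emb f.toMeasurableEquiv.measurableEmbedding,
    f.injective.preimage_image]

theorem volume_orthogonalProjectionOnto_image_of_sub_self_eq_closedBall
    (hE : Module.finrank ℝ E = 2) {K : Set E} (hK : IsCompact K) (hK' : Convex ℝ K)
    {r : ℝ} (hr : 0 ≤ r) (h : K - K = closedBall 0 r) {t : E} (ht : t ≠ 0) :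
    volume ((ℝ ∙ t)ᗮ.orthogonalProjectionOnto '' K) = ENNReal.ofReal r := by
  have : Fact (Module.finrank ℝ E = 1 + 1) := ⟨hE⟩
  let π := (ℝ ∙ t)ᗮ.orthogonalProjectionOnto
  have h_image : π '' K - π '' K = closedBall 0 r := by
    rw [← image_sub, h, orthogonalProjectionOnto_image_closedBall_zero]
  exact volume_eq_of_sub_self_eq_closedBall_of_finrank_eq_one
    (Submodule.finrank_orthogonal_span_singleton ht) (hK.image π.continuous)
    (hK'.linear_image (π : E →ₗ[ℝ] (ℝ ∙ t)ᗮ)) hr h_image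

end InnerProductSpace

theorem stmt8_general {E : Type*} [NormedAddCommGroup E] [InnerProductSpace ℝ E]
    [FiniteDimensional ℝ E] [MeasurableSpace E] [BorelSpace E] (hE : Module.finrank ℝ E = 2)
    {K : Set E} (hK_compact : IsCompact K) (hK_convex : Convex ℝ K)
    (hK_interior : (interior K).Nonempty) {r : ℝ} (hr : 0 < r) (h : K - K = closedBall 0 r)
    {v w : E} (h_inter : ((v +ᵥ K) ∩ (w +ᵥ K)).Nonempty)
    (h_disj : Disjoint (interior (v +ᵥ K)) (interior (w +ᵥ K))) :
    volume (convexHull ℝ ((v +ᵥ K) ∪ (w +ᵥ K))) = volume K + ENNReal.ofReal (r ^ 2) := by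
  have h_norm : ‖w - v‖ = r :=
    norm_sub_eq_of_touching hK_convex hK_interior hr.ne' h h_inter h_disj
  have h_ne : w - v ≠ 0 := norm_pos_iff.1 (h_norm ▸ hr)
  rw [volume_convexHull_vadd_union_vadd hK_compact hK_convex,
    volume_orthogonalProjectionOnto_image_of_sub_self_eq_closedBall hE hK_compact hK_convex hr.le h
      h_ne, ← ofReal_norm, h_norm, ← ENNReal.ofReal_mul hr.le, sq]

theorem stmt8 (K : Set (EuclideanSpace ℝ (Fin 2))) (hK : IsConvexBody K)
    (h : ∃ r : ℝ, 0 < r ∧ K - K = Metric.closedBall 0 r) :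
    TCVP K := by
  obtain ⟨r, hr, h⟩ := h
  exact ⟨_, fun v w hvw => congrArg ENNReal.toReal <| stmt8_general finrank_euclideanSpace_fin
    hK.1 hK.2.1 hK.2.2 hr h hvw.1 (disjoint_iff_inter_eq_empty.2 hvw.2)⟩
end

section
/- Let n ≥ 2, let K ⊂ ℝⁿ be a convex body with the origin in its interior, let 0 ≤ λ < 1, and let t ∈ ℝⁿ. Then G_{K,0}(t/(1−λ)) = (G_{K,λ}(t) − λⁿ · vol_n(K)) / (1 − λⁿ). Consequently, if L is a sublevel set of G_{K,λ} then (1/(1−λ))·L is a sublevel set of G_{K,0}, i.e., an illumination body of K, and vice versa. -/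
open MeasureTheory Set Pointwise Metric

/-- The λ-homothetic convex hull function `G_{K,λ}(t) = volₙ(conv(K ∪ (λK + t)))`. -/
noncomputable def homChf {n : ℕ} (K : Set (EuclideanSpace ℝ (Fin n))) (l : ℝ)
    (t : EuclideanSpace ℝ (Fin n)) : ℝ :=
  (volume (convexHull ℝ (K ∪ (t +ᵥ l • K)))).toReal

/-!
Move the apex `p = (1 - l)⁻¹ • t` to the origin. For convex `K`, the hull of `K ∪ l • K` is then the
shell `Icc l 1 • K` of the cone `Icc 0 1 • K` with apex `0`; the rest of the cone is the scaled
copy `l • (Icc 0 1 • K) = Icc 0 l • K`, and by convexity the two pieces overlap exactly in `l • K`.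
Since scaling by `l` multiplies volume by `l ^ n`, additivity of volume expresses the volume of the
shell as an increasing affine function of the volume of the cone.
-/

section Cone

variable {𝕜 E : Type*} [Field 𝕜] [LinearOrder 𝕜] [IsStrictOrderedRing 𝕜] [AddCommGroup E]
  [Module 𝕜 E] {K : Set E}

lemma convex_set_smul {s : Set 𝕜} (hs : Convex 𝕜 s) (hs0 : s ⊆ Ici 0) (hK : Convex 𝕜 K) :
    Convex 𝕜 (s • K) := by
  rintro _ ⟨r, hr, x, hx, rfl⟩ _ ⟨r', hr', x', hx', rfl⟩ a b ha hb hab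
  obtain ⟨y, hy, hyx⟩ :=
    hK.exists_mem_add_smul_eq hx hx' (mul_nonneg ha (hs0 hr)) (mul_nonneg hb (hs0 hr'))
  refine ⟨a • r + b • r', hs hr hr' ha hb hab, y, hy, ?_⟩
  simpa only [smul_eq_mul, mul_smul] using hyx

lemma convexHull_union_smul (hK : Convex 𝕜 K) {l : 𝕜} (hl0 : 0 ≤ l) (hl1 : l ≤ 1) :
    convexHull 𝕜 (K ∪ l • K) = Icc l 1 • K := by
  refine (convexHull_min (union_subset ?_ ?_) ?_).antisymm ?_
  · simpa only [one_smul] using smul_set_subset_smul (t := K) (right_mem_Icc.2 hl1)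
  · exact smul_set_subset_smul (left_mem_Icc.2 hl1)
  · exact convex_set_smul (convex_Icc l 1) (fun _ hr => hl0.trans hr.1) hK
  · rintro _ ⟨r, hr, x, hx, rfl⟩
    obtain ⟨a, b, ha, hb, hab, rfl⟩ := Icc_subset_segment hr
    have hlx : l • x ∈ convexHull 𝕜 (K ∪ l • K) :=
      subset_convexHull 𝕜 _ (.inr (smul_mem_smul_set hx))
    have hx' : x ∈ convexHull 𝕜 (K ∪ l • K) := subset_convexHull 𝕜 _ (.inl hx)
    simpa only [smul_eq_mul, mul_one, add_smul, mul_smul] using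
      convex_convexHull 𝕜 _ hlx hx' ha hb hab

lemma convexHull_union_vadd_smul (hK : Convex 𝕜 K) {l : 𝕜} (hl0 : 0 ≤ l) (hl1 : l ≤ 1) (p : E) :
    convexHull 𝕜 (K ∪ ((1 - l) • p +ᵥ l • K)) = p +ᵥ Icc l 1 • (-p +ᵥ K) := by
  have htranslate : (1 - l) • p +ᵥ l • K = p +ᵥ l • (-p +ᵥ K) := by
    simp only [← image_vadd, ← image_smul, image_image, vadd_eq_add]
    exact image_congr fun x _ => by module
  rw [← convexHull_union_smul (hK.vadd (-p)) hl0 hl1, ← convexHull_vadd, vadd_set_union,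
    vadd_neg_vadd, htranslate]

lemma smul_Icc_zero_one_smul (K : Set E) {l : 𝕜} (hl0 : 0 ≤ l) :
    l • (Icc (0 : 𝕜) 1 • K) = Icc 0 l • K := by
  have himage : l • Icc (0 : 𝕜) 1 = Icc (l * 0) (l * 1) := image_mul_left_Icc hl0 zero_le_one
  rw [← smul_assoc, himage, mul_zero, mul_one]

lemma mem_smul_of_mem_smul_of_mem_smul (hK : Convex 𝕜 K) {a b c : 𝕜} (ha : 0 ≤ a) (hab : a ≤ b)
    (hbc : b ≤ c) {x : E} (hxa : x ∈ a • K) (hxc : x ∈ c • K) : x ∈ b • K := by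
  obtain rfl | hab := hab.eq_or_lt
  · exact hxa
  obtain ⟨y, hy, hyx : a • y = x⟩ := hxa
  obtain ⟨z, hz, hzx : c • z = x⟩ := hxc
  have hb : 0 < b := ha.trans_lt hab
  have hac : 0 < c - a := sub_pos.2 (hab.trans_le hbc)
  -- For `a ≠ 0` these weights express `b⁻¹ • x` through `y = a⁻¹ • x` and `z = c⁻¹ • x`; multiplied
  -- out in this way they also cover `a = 0`.
  refine ⟨(a * (c - b) / (b * (c - a))) • y + (c * (b - a) / (b * (c - a))) • z,
    hK hy hz ?_ ?_ ?_, ?_⟩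
  · exact div_nonneg (mul_nonneg ha (sub_nonneg.2 hbc)) (by positivity)
  · exact div_nonneg (mul_nonneg (hb.le.trans hbc) (sub_nonneg.2 hab.le)) (by positivity)
  · field_simp
    ring
  · calc
      _ = ((c - b) / (c - a)) • a • y + ((b - a) / (c - a)) • c • z := by
        match_scalars <;> field_simp
      _ = ((c - b) / (c - a)) • x + ((b - a) / (c - a)) • x := by rw [hyx, hzx]
      _ = x := by
        match_scalars
        field_simp
        ring

lemma Icc_smul_inter_Icc_smul (hK : Convex 𝕜 K) {a b c : 𝕜} (ha : 0 ≤ a) (hab : a ≤ b)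
    (hbc : b ≤ c) : Icc b c • K ∩ Icc a b • K = b • K := by
  refine Subset.antisymm ?_ (subset_inter (smul_set_subset_smul (left_mem_Icc.2 hbc))
    (smul_set_subset_smul (right_mem_Icc.2 hab)))
  rintro x ⟨⟨r, hr, y, hy, hyx⟩, ⟨r', hr', y', hy', hyx'⟩⟩
  exact mem_smul_of_mem_smul_of_mem_smul hK (ha.trans hr'.1) hr'.2 hr.1 ⟨y', hy', hyx'⟩ ⟨y, hy, hyx⟩

end Cone

section Sublevel

/-- `L` is a sublevel set of `f`, that is, `{x | f x ≤ c}` for some level `c`. Every level is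
allowed, so a sublevel set may be empty. -/
def IsSublevelSet {α β : Type*} [LE β] (f : α → β) (L : Set α) : Prop :=
  ∃ c : β, L = {x | f x ≤ c}

lemma isSublevelSet_mul_add_const {α 𝕜 : Type*} [Field 𝕜] [LinearOrder 𝕜] [IsStrictOrderedRing 𝕜]
    {f : α → 𝕜} {L : Set α} {a : 𝕜} (ha : 0 < a) (b : 𝕜) :
    IsSublevelSet (fun x => a * f x + b) L ↔ IsSublevelSet f L := by
  constructor
  · rintro ⟨c, rfl⟩
    refine ⟨(c - b) / a, ?_⟩
    simp only [le_div_iff₀' ha, le_sub_iff_add_le]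
  · rintro ⟨c, rfl⟩
    refine ⟨a * c + b, ?_⟩
    simp only [add_le_add_iff_right, mul_le_mul_iff_right₀ ha]

lemma isSublevelSet_comp_smul₀ {G α β : Type*} [GroupWithZero G] [MulAction G α] [LE β]
    {f : α → β} {L : Set α} {g : G} (hg : g ≠ 0) :
    IsSublevelSet (fun x => f (g • x)) L ↔ IsSublevelSet f (g • L) := by
  refine exists_congr fun c => ?_
  rw [← eq_inv_smul_iff₀ hg, ← preimage_smul₀ hg, preimage_ofPred_eq]

end Sublevel

section Volume

/-- The homothetic convex hull function `G_{K,l}` with respect to an arbitrary measure `μ` on a real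
vector space, `homChf` being the case of Lebesgue measure. Its value is `0` where the hull has
infinite measure. -/
noncomputable def homotheticHullFun {E : Type*} [AddCommGroup E] [Module ℝ E] [MeasurableSpace E]
    (μ : Measure E) (K : Set E) (l : ℝ) (t : E) : ℝ :=
  μ.real (convexHull ℝ (K ∪ (t +ᵥ l • K)))

variable {E : Type*} [NormedAddCommGroup E] [NormedSpace ℝ E] [FiniteDimensional ℝ E]
  [MeasurableSpace E] [BorelSpace E] (μ : Measure E) [μ.IsAddHaarMeasure] {K : Set E}

lemma real_addHaar_smul_of_nonneg {r : ℝ} (hr : 0 ≤ r) (s : Set E) :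
    μ.real (r • s) = r ^ Module.finrank ℝ E * μ.real s := by
  rw [measureReal_def, Measure.addHaar_smul_of_nonneg μ hr, ENNReal.toReal_mul,
    ENNReal.toReal_ofReal (pow_nonneg hr _), measureReal_def]

lemma real_addHaar_Icc_smul_add (hK : Convex ℝ K) (hKb : Bornology.IsBounded K) {l : ℝ}
    (hl0 : 0 ≤ l) (hl1 : l ≤ 1) :
    μ.real (Icc l 1 • K) + l ^ Module.finrank ℝ E * μ.real (Icc (0 : ℝ) 1 • K) =
      μ.real (Icc (0 : ℝ) 1 • K) + l ^ Module.finrank ℝ E * μ.real K := by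
  have hshell : NullMeasurableSet (Icc l 1 • K) μ :=
    (convex_set_smul (convex_Icc l 1) (fun _ hr => hl0.trans hr.1) hK).nullMeasurableSet μ
  have hcone : μ (Icc (0 : ℝ) 1 • K) ≠ ⊤ := by
    rw [← convexHull_union_smul hK le_rfl zero_le_one]
    exact (isBounded_convexHull.2 (hKb.union (hKb.smul₀ 0))).measure_lt_top.ne
  have hunion : Icc l 1 • K ∪ Icc 0 l • K = Icc (0 : ℝ) 1 • K := by
    rw [← union_smul, union_comm, Icc_union_Icc_eq_Icc hl0 hl1]
  have hadd := measureReal_union_add_inter₀' hshell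
    (measure_ne_top_of_subset (subset_union_left.trans_eq hunion) hcone)
    (measure_ne_top_of_subset (subset_union_right.trans_eq hunion) hcone)
  rw [hunion, Icc_smul_inter_Icc_smul hK le_rfl hl0 hl1, ← smul_Icc_zero_one_smul K hl0,
    real_addHaar_smul_of_nonneg μ hl0, real_addHaar_smul_of_nonneg μ hl0] at hadd
  exact hadd.symm

lemma homotheticHullFun_one_sub_smul (hK : Convex ℝ K) {l : ℝ} (hl0 : 0 ≤ l) (hl1 : l ≤ 1)
    (p : E) : homotheticHullFun μ K l ((1 - l) • p) = μ.real (Icc l 1 • (-p +ᵥ K)) := by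
  rw [homotheticHullFun, convexHull_union_vadd_smul hK hl0 hl1, measureReal_def, measure_vadd,
    measureReal_def]

lemma homotheticHullFun_eq_mul_add (hK : Convex ℝ K) (hKb : Bornology.IsBounded K) {l : ℝ}
    (hl0 : 0 ≤ l) (hl1 : l < 1) (t : E) :
    homotheticHullFun μ K l t =
      (1 - l ^ Module.finrank ℝ E) * homotheticHullFun μ K 0 ((1 - l)⁻¹ • t) +
        l ^ Module.finrank ℝ E * μ.real K := by
  obtain ⟨p, rfl⟩ : ∃ p, (1 - l) • p = t := ⟨_, smul_inv_smul₀ (sub_pos.2 hl1).ne' t⟩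
  rw [inv_smul_smul₀ (sub_pos.2 hl1).ne', homotheticHullFun_one_sub_smul μ hK hl0 hl1.le]
  have hcone := homotheticHullFun_one_sub_smul μ hK le_rfl zero_le_one p
  rw [sub_zero, one_smul] at hcone
  have htranslate : μ.real (-p +ᵥ K) = μ.real K := congrArg ENNReal.toReal (measure_vadd μ (-p) K)
  have hadd := real_addHaar_Icc_smul_add μ (hK.vadd (-p)) (hKb.vadd (-p)) hl0 hl1.le
  rw [hcone, ← htranslate]
  linarith

end Volume

theorem stmt10_general {E : Type*} [NormedAddCommGroup E] [NormedSpace ℝ E]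
    [FiniteDimensional ℝ E] [Nontrivial E] [MeasurableSpace E] [BorelSpace E] (μ : Measure E)
    [μ.IsAddHaarMeasure] {K : Set E} (hK : Convex ℝ K) (hKb : Bornology.IsBounded K) {l : ℝ}
    (hl0 : 0 ≤ l) (hl1 : l < 1) :
    (∀ t : E, homotheticHullFun μ K 0 ((1 - l)⁻¹ • t) =
      (homotheticHullFun μ K l t - l ^ Module.finrank ℝ E * μ.real K) /
        (1 - l ^ Module.finrank ℝ E)) ∧
      ∀ L : Set E, IsSublevelSet (homotheticHullFun μ K l) L ↔
        IsSublevelSet (homotheticHullFun μ K 0) ((1 - l)⁻¹ • L) := by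
  have hpow : 0 < 1 - l ^ Module.finrank ℝ E :=
    sub_pos.2 (pow_lt_one₀ hl0 hl1 Module.finrank_pos.ne')
  have haffine := homotheticHullFun_eq_mul_add μ hK hKb hl0 hl1
  refine ⟨fun t => ?_, fun L => ?_⟩
  · rw [haffine t, add_sub_cancel_right, mul_div_cancel_left₀ _ hpow.ne']
  · rw [funext haffine, isSublevelSet_mul_add_const hpow,
      isSublevelSet_comp_smul₀ (f := homotheticHullFun μ K 0) (inv_ne_zero (sub_pos.2 hl1).ne')]

theorem stmt10 {n : ℕ} (hn : 2 ≤ n) (K : Set (EuclideanSpace ℝ (Fin n)))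
    (hK : IsConvexBody K) (h0 : (0 : EuclideanSpace ℝ (Fin n)) ∈ interior K)
    (l : ℝ) (hl0 : 0 ≤ l) (hl1 : l < 1) (t : EuclideanSpace ℝ (Fin n)) :
    homChf K 0 ((1 - l)⁻¹ • t) = (homChf K l t - l ^ n * (volume K).toReal) / (1 - l ^ n) ∧
      (∀ L : Set (EuclideanSpace ℝ (Fin n)),
        (∃ c : ℝ, L = {s | homChf K l s ≤ c}) →
          ∃ d : ℝ, (1 - l)⁻¹ • L = {s | homChf K 0 s ≤ d}) ∧
      (∀ L : Set (EuclideanSpace ℝ (Fin n)),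
        (∃ d : ℝ, (1 - l)⁻¹ • L = {s | homChf K 0 s ≤ d}) →
          ∃ c : ℝ, L = {s | homChf K l s ≤ c}) := by
  have : NeZero n := ⟨by omega⟩
  obtain ⟨hformula, hsublevel⟩ := stmt10_general volume hK.2.1 hK.1.isBounded hl0 hl1
  rw [finrank_euclideanSpace_fin] at hformula
  exact ⟨hformula t, fun L => (hsublevel L).1, fun L => (hsublevel L).2⟩
end

section
/- Let 0 ≤ λ < 1 and n ≥ 2. If K, L ⊂ ℝⁿ are convex bodies with the origin in their interiors and G_{K,λ}(t) = G_{L,λ}(t) for all t ∈ ℝⁿ, then K = L. -/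
open MeasureTheory Set Pointwise Metric

/-!
Since `K ⊆ conv (K ∪ (t + λK))`, the least value of `G_K` is the measure of `K`. A closed set with
interior points which carries the whole finite measure of a convex set around it equals that set,
so `G_K` attains this value exactly when `t + λK ⊆ K`. Writing `t = (1 - λ)s`, this inclusion says
that the homothety with centre `s` and ratio `λ` maps `K` into itself; by convexity this holds for
`s ∈ K`, and conversely the orbit of any point of `K` converges to the fixed point `s`, so that
`s ∈ K`. Hence the set of minimisers of `G_K` is `(1 - λ)K`, and it determines `K`.
-/

section Homothety

open AffineMap Filter Topology

theorem image_homothety_eq_smul_vadd_smul {R V : Type*} [CommRing R] [AddCommGroup V] [Module R V]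
    (s : V) (l : R) (K : Set V) : homothety s l '' K = (1 - l) • s +ᵥ l • K := by
  rw [← image_vadd, ← image_smul, image_image]
  refine image_congr fun y _ ↦ ?_
  rw [homothety_apply, vsub_eq_sub, vadd_eq_add, vadd_eq_add]
  module

theorem homothety_pow_eq_iterate {R V P : Type*} [CommRing R] [AddCommGroup V] [Module R V]
    [AddTorsor V P] (s : P) (l : R) (k : ℕ) : ⇑(homothety s (l ^ k)) = (homothety s l)^[k] := by
  rw [← coe_homothetyHom, map_pow, coe_homothetyHom]
  exact hom_coe_pow _ rfl (fun _ _ ↦ rfl) _ _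

theorem mem_of_mapsTo_homothety {R V P : Type*} [SeminormedCommRing R]
    [AddCommGroup V] [Module R V] [TopologicalSpace V] [ContinuousSMul R V] [AddTorsor V P]
    [TopologicalSpace P] [IsTopologicalAddTorsor P] {K : Set P} (hK : IsClosed K)
    (hne : K.Nonempty) {s : P} {l : R} (hl : ‖l‖ < 1) (hmaps : MapsTo (homothety s l) K K) :
    s ∈ K := by
  obtain ⟨y, hy⟩ := hne
  have orbit_mem (k : ℕ) : homothety s (l ^ k) y ∈ K := by
    rw [homothety_pow_eq_iterate]
    exact hmaps.iterate k hy
  have orbit_tendsto : Tendsto (fun k : ℕ ↦ homothety s (l ^ k) y) atTop (𝓝 s) := by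
    have hcont : Continuous fun r : R ↦ homothety s r y := by
      simpa only [homothety_eq_lineMap] using lineMap_continuous
    have hcont_zero : Tendsto (fun r : R ↦ homothety s r y) (𝓝 0) (𝓝 s) := by
      simpa only [homothety_zero, const_apply] using hcont.tendsto 0
    exact hcont_zero.comp (tendsto_pow_atTop_nhds_zero_of_norm_lt_one hl)
  exact hK.mem_of_tendsto orbit_tendsto (Eventually.of_forall orbit_mem)

theorem smul_vadd_smul_subset_of_mem {R E : Type*} [Ring R] [PartialOrder R] [IsOrderedRing R]
    [AddCommGroup E] [Module R E] {K : Set E} (hK : Convex R K) {l : R} (hl0 : 0 ≤ l)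
    (hl1 : l ≤ 1) {s : E} (hs : s ∈ K) : (1 - l) • s +ᵥ l • K ⊆ K := by
  rintro _ ⟨_, ⟨y, hy, rfl⟩, rfl⟩
  exact hK hs hy (sub_nonneg.2 hl1) hl0 (sub_add_cancel 1 l)

theorem smul_vadd_smul_subset_iff {E : Type*} [AddCommGroup E] [Module ℝ E] [TopologicalSpace E]
    [IsTopologicalAddGroup E] [ContinuousSMul ℝ E] {K : Set E} (hcl : IsClosed K)
    (hcv : Convex ℝ K) (hne : K.Nonempty) {l : ℝ} (hl0 : 0 ≤ l) (hl1 : l < 1) {s : E} :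
    (1 - l) • s +ᵥ l • K ⊆ K ↔ s ∈ K := by
  refine ⟨fun h ↦ ?_, smul_vadd_smul_subset_of_mem hcv hl0 hl1.le⟩
  rw [← image_homothety_eq_smul_vadd_smul, ← mapsTo_iff_image_subset] at h
  exact mem_of_mapsTo_homothety hcl hne (by rwa [Real.norm_of_nonneg hl0]) h

end Homothety

theorem eq_of_subset_of_measure_le_of_isClosed {X : Type*} [TopologicalSpace X] [MeasurableSpace X]
    [OpensMeasurableSpace X] {μ : Measure X} [μ.IsOpenPosMeasure] {K C : Set X} (hK : IsClosed K)
    (hKC : K ⊆ C) (hC : C ⊆ closure (interior C)) (hμ : μ C ≤ μ K) (hfin : μ K ≠ ⊤) : K = C := by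
  have hdiff : μ (C \ K) = 0 := by
    rw [measure_sdiff hKC hK.measurableSet.nullMeasurableSet hfin, tsub_eq_zero_of_le hμ]
  have hint : interior C \ K = ∅ :=
    (isOpen_interior.sdiff hK).eq_empty_of_measure_zero
      (measure_mono_null (sdiff_subset_sdiff_left interior_subset) hdiff)
  exact hKC.antisymm (hC.trans (closure_minimal (sdiff_eq_empty.1 hint) hK))

/-- The convex hull of `K` and a translate of its homothetic copy `l • K`. Its measure, as a
function of the translation `t`, is the homothetic convex hull function of `K`. -/
def homotheticHull {E : Type*} [AddCommGroup E] [Module ℝ E] (K : Set E) (l : ℝ) (t : E) : Set E :=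
  convexHull ℝ (K ∪ (t +ᵥ l • K))

theorem subset_homotheticHull {E : Type*} [AddCommGroup E] [Module ℝ E] (K : Set E) (l : ℝ)
    (t : E) : K ⊆ homotheticHull K l t :=
  subset_union_left.trans (subset_convexHull ℝ _)

theorem homotheticHull_eq_self_iff {E : Type*} [AddCommGroup E] [Module ℝ E] {K : Set E}
    (hcv : Convex ℝ K) {l : ℝ} {t : E} : homotheticHull K l t = K ↔ t +ᵥ l • K ⊆ K := by
  constructor
  · intro h
    calc t +ᵥ l • K ⊆ homotheticHull K l t := subset_union_right.trans (subset_convexHull ℝ _)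
      _ = K := h
  · intro h
    rw [homotheticHull, union_eq_self_of_subset_right h, hcv.convexHull_eq]

theorem isBounded_homotheticHull {E : Type*} [SeminormedAddCommGroup E] [NormedSpace ℝ E]
    {K : Set E} (hK : Bornology.IsBounded K) (l : ℝ) (t : E) :
    Bornology.IsBounded (homotheticHull K l t) :=
  isBounded_convexHull.2 (hK.union ((hK.smul₀ l).vadd t))

theorem iInf_measure_homotheticHull {E : Type*} [AddCommGroup E] [Module ℝ E] [MeasurableSpace E]
    (μ : Measure E) {K : Set E} (hcv : Convex ℝ K) (hne : K.Nonempty) {l : ℝ} (hl0 : 0 ≤ l)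
    (hl1 : l ≤ 1) : ⨅ t, μ (homotheticHull K l t) = μ K := by
  obtain ⟨s, hs⟩ := hne
  refine le_antisymm ?_ (le_iInf fun t ↦ measure_mono (subset_homotheticHull K l t))
  calc ⨅ t, μ (homotheticHull K l t) ≤ μ (homotheticHull K l ((1 - l) • s)) := iInf_le _ _
    _ = μ K := by
      rw [(homotheticHull_eq_self_iff hcv).2 (smul_vadd_smul_subset_of_mem hcv hl0 hl1 hs)]

section Measure

variable {E : Type*} [AddCommGroup E] [Module ℝ E] [TopologicalSpace E] [IsTopologicalAddGroup E]
  [ContinuousSMul ℝ E] [MeasurableSpace E] [OpensMeasurableSpace E]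
  {μ : Measure E} [μ.IsOpenPosMeasure] {K L : Set E} {l : ℝ}

theorem measure_homotheticHull_eq_iff (hcl : IsClosed K) (hcv : Convex ℝ K)
    (hint : (interior K).Nonempty) (hfin : μ K ≠ ⊤) (hl0 : 0 ≤ l) (hl1 : l < 1) {s : E} :
    μ (homotheticHull K l ((1 - l) • s)) = μ K ↔ s ∈ K := by
  rw [← smul_vadd_smul_subset_iff hcl hcv (hint.mono interior_subset) hl0 hl1,
    ← homotheticHull_eq_self_iff hcv]
  refine ⟨fun h ↦ ?_, congrArg μ⟩
  have hK : K ⊆ homotheticHull K l ((1 - l) • s) := subset_homotheticHull K l _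
  have hC : Convex ℝ (homotheticHull K l ((1 - l) • s)) := convex_convexHull ℝ _
  refine (eq_of_subset_of_measure_le_of_isClosed hcl hK ?_ h.le hfin).symm
  rw [hC.closure_interior_eq_closure_of_nonempty_interior (hint.mono (interior_mono hK))]
  exact subset_closure

theorem stmt12_general (hl0 : 0 ≤ l) (hl1 : l < 1) (hKcl : IsClosed K) (hKcv : Convex ℝ K)
    (hKint : (interior K).Nonempty) (hKfin : μ K ≠ ⊤) (hLcl : IsClosed L) (hLcv : Convex ℝ L)
    (hLint : (interior L).Nonempty)
    (h : ∀ t, μ (homotheticHull K l t) = μ (homotheticHull L l t)) : K = L := by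
  have hμ : μ K = μ L := by
    rw [← iInf_measure_homotheticHull μ hKcv (hKint.mono interior_subset) hl0 hl1.le,
      ← iInf_measure_homotheticHull μ hLcv (hLint.mono interior_subset) hl0 hl1.le, iInf_congr h]
  ext s
  rw [← measure_homotheticHull_eq_iff hKcl hKcv hKint hKfin hl0 hl1, h, hμ,
    measure_homotheticHull_eq_iff hLcl hLcv hLint (hμ ▸ hKfin) hl0 hl1]

end Measure

theorem homChf_eq_iff {n : ℕ} {K L : Set (EuclideanSpace ℝ (Fin n))} (hK : Bornology.IsBounded K)
    (hL : Bornology.IsBounded L) {l : ℝ} {t : EuclideanSpace ℝ (Fin n)} :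
    homChf K l t = homChf L l t ↔ volume (homotheticHull K l t) = volume (homotheticHull L l t) :=
  ENNReal.toReal_eq_toReal_iff' (isBounded_homotheticHull hK l t).measure_lt_top.ne
    (isBounded_homotheticHull hL l t).measure_lt_top.ne

theorem stmt12 {n : ℕ} (hn : 2 ≤ n) (l : ℝ) (hl0 : 0 ≤ l) (hl1 : l < 1)
    (K L : Set (EuclideanSpace ℝ (Fin n))) (hK : IsConvexBody K) (hL : IsConvexBody L)
    (hK0 : (0 : EuclideanSpace ℝ (Fin n)) ∈ interior K)
    (hL0 : (0 : EuclideanSpace ℝ (Fin n)) ∈ interior L)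
    (h : ∀ t : EuclideanSpace ℝ (Fin n), homChf K l t = homChf L l t) :
    K = L :=
  stmt12_general hl0 hl1 hK.1.isClosed hK.2.1 hK.2.2 hK.1.measure_lt_top.ne hL.1.isClosed
    hL.2.1 hL.2.2 fun t ↦ (homChf_eq_iff hK.1.isBounded hL.1.isBounded).1 (h t)
end

section
/- Let 0 ≤ λ < 1 and n ≥ 2, and let K, L ⊂ ℝⁿ be convex bodies with the origin in their interiors. If G_{K,λ}(t) depends only on the gauge of t with respect to L — i.e., there is a function f : ℝ → ℝ such that G_{K,λ}(t) = f(inf{τ > 0 : t ∈ τL}) for all t ∈ ℝⁿ — then K is a homothetic copy of L, i.e., K = x + μL for some x ∈ ℝⁿ and μ > 0. -/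
open MeasureTheory Set Pointwise Metric

/-!
The function `G_{K,λ}` attains its minimum `vol K` exactly where `λK + t ⊆ K`, that is, on
`(1 - λ)K`. If `G_{K,λ}` factors through the gauge of `L`, membership in `K` therefore depends only
on the gauge. Every point has the same gauge as some point of any given ray from the origin. Hence
`K` meets opposite rays, so it contains the origin and meets each ray in a segment starting there;
comparing gauges along one ray shows that `K` is a sublevel set of the gauge, i.e. a dilate of `L`.
-/

open Filter Function Topology

section HomothetHull

variable {E : Type*} [AddCommGroup E] [Module ℝ E] {K : Set E} {l : ℝ} {k : E}

/-- The convex hull of `K` and its homothetic copy `l • K + t`, the set whose volume is the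
homothetic convex hull function of `K`. -/
def homothetHull (K : Set E) (l : ℝ) (t : E) : Set E :=
  convexHull ℝ (K ∪ (t +ᵥ l • K))

theorem homothetHull_eq_self_iff (hK : Convex ℝ K) {t : E} :
    homothetHull K l t = K ↔ t +ᵥ l • K ⊆ K := by
  refine ⟨fun h => ?_, fun h => ?_⟩
  · exact (subset_union_right.trans (subset_convexHull ℝ _)).trans h.subset
  · rw [homothetHull, union_eq_self_of_subset_right h, hK.convexHull_eq]

variable [TopologicalSpace E] [IsTopologicalAddGroup E] [ContinuousSMul ℝ E]

theorem vadd_smul_subset_iff_mem (hconv : Convex ℝ K) (hclosed : IsClosed K) (hne : K.Nonempty)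
    (hl0 : 0 ≤ l) (hl1 : l < 1) : ((1 - l) • k) +ᵥ l • K ⊆ K ↔ k ∈ K := by
  refine ⟨fun h => ?_, fun hk => ?_⟩
  · -- `k` is the fixed point of the contraction `x ↦ (1 - l) • k + l • x` of `K` into itself.
    obtain ⟨x, hx⟩ := hne
    have iterate_mem (j : ℕ) : k + l ^ j • (x - k) ∈ K := by
      induction j with
      | zero => simpa using hx
      | succ j ih =>
        have hstep := h (vadd_mem_vadd_set (smul_mem_smul_set ih))
        rw [vadd_eq_add] at hstep
        convert hstep using 1
        module
    have tendsto_iterate : Tendsto (fun j : ℕ => k + l ^ j • (x - k)) atTop (𝓝 k) := by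
      simpa using ((tendsto_pow_atTop_nhds_zero_of_lt_one hl0 hl1).smul_const (x - k)).const_add k
    exact hclosed.mem_of_tendsto tendsto_iterate (.of_forall iterate_mem)
  · rintro _ ⟨_, ⟨x, hx, rfl⟩, rfl⟩
    exact hconv hk hx (sub_nonneg.2 hl1.le) hl0 (sub_add_cancel 1 l)

end HomothetHull

section Measure

variable {E : Type*} [AddCommGroup E] [Module ℝ E] [TopologicalSpace E] [IsTopologicalAddGroup E]
  [ContinuousSMul ℝ E] [MeasurableSpace E] {ν : Measure E} [ν.IsOpenPosMeasure] {K C : Set E}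
  {l : ℝ} {k : E}

theorem subset_of_measure_diff_eq_zero (hK : IsClosed K) (hC : Convex ℝ C)
    (hne : (interior C).Nonempty) (h : ν (C \ K) = 0) : C ⊆ K := by
  have interior_diff_empty : interior C \ K = ∅ :=
    (isOpen_interior.sdiff hK).eq_empty_of_measure_zero
      (measure_mono_null (sdiff_subset_sdiff_left interior_subset) h)
  calc C ⊆ closure C := subset_closure
    _ = closure (interior C) := (hC.closure_interior_eq_closure_of_nonempty_interior hne).symm
    _ ⊆ K := closure_minimal (sdiff_eq_empty.1 interior_diff_empty) hK

variable [OpensMeasurableSpace E]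

theorem eq_of_subset_of_measureReal_eq (hK : IsClosed K) (hC : Convex ℝ C)
    (hne : (interior K).Nonempty) (hfin : ν K ≠ ⊤) (hKC : K ⊆ C) (h : ν.real C = ν.real K) :
    C = K := by
  have hpos : 0 < ν.real C := by
    rw [h]
    exact ENNReal.toReal_pos (Measure.measure_pos_of_nonempty_interior ν hne).ne' hfin
  have hCfin : ν C ≠ ⊤ := (ENNReal.toReal_pos_iff.1 hpos).2.ne
  have hdiff : ν (C \ K) = 0 := by
    rw [measure_sdiff hKC hK.measurableSet.nullMeasurableSet hfin,
      (ENNReal.toReal_eq_toReal_iff' hCfin hfin).1 h, tsub_self]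
  exact (subset_of_measure_diff_eq_zero hK hC (hne.mono (interior_mono hKC)) hdiff).antisymm hKC

theorem measureReal_homothetHull_eq_iff (hconv : Convex ℝ K) (hclosed : IsClosed K)
    (hne : (interior K).Nonempty) (hfin : ν K ≠ ⊤) (hl0 : 0 ≤ l) (hl1 : l < 1) :
    ν.real (homothetHull K l ((1 - l) • k)) = ν.real K ↔ k ∈ K := by
  rw [← vadd_smul_subset_iff_mem hconv hclosed (hne.mono interior_subset) hl0 hl1,
    ← homothetHull_eq_self_iff hconv]
  refine ⟨fun h => ?_, congrArg ν.real⟩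
  exact eq_of_subset_of_measureReal_eq hclosed (convex_convexHull ℝ _) hne hfin
    (subset_union_left.trans (subset_convexHull ℝ _)) h

theorem mem_factorsThrough_gauge {L : Set E} (hconv : Convex ℝ K) (hclosed : IsClosed K)
    (hne : (interior K).Nonempty) (hfin : ν K ≠ ⊤) (hl0 : 0 ≤ l) (hl1 : l < 1)
    (h : FactorsThrough (fun t => ν.real (homothetHull K l t)) (gauge L)) :
    FactorsThrough (· ∈ K) (gauge L) := by
  intro x y hxy
  have gauge_smul_eq : gauge L ((1 - l) • x) = gauge L ((1 - l) • y) := by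
    rw [gauge_smul_of_nonneg (sub_nonneg.2 hl1.le), gauge_smul_of_nonneg (sub_nonneg.2 hl1.le),
      hxy]
  have measure_eq : ν.real (homothetHull K l ((1 - l) • x)) =
      ν.real (homothetHull K l ((1 - l) • y)) := h gauge_smul_eq
  beta_reduce
  rw [← measureReal_homothetHull_eq_iff (ν := ν) hconv hclosed hne hfin hl0 hl1, measure_eq,
    measureReal_homothetHull_eq_iff hconv hclosed hne hfin hl0 hl1]

end Measure

section Gauge

variable {E : Type*} [AddCommGroup E] [Module ℝ E] {K L : Set E} {v : E}

theorem gauge_div_smul (hv : 0 < gauge L v) (x : E) :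
    gauge L ((gauge L x / gauge L v) • v) = gauge L x := by
  rw [gauge_smul_of_nonneg (div_nonneg (gauge_nonneg x) hv.le), smul_eq_mul,
    div_mul_cancel₀ _ hv.ne']

theorem zero_mem_of_mem_factorsThrough_gauge (hK : Convex ℝ K)
    (h : FactorsThrough (· ∈ K) (gauge L)) (hv : v ∈ K) (hneg : 0 < gauge L (-v)) :
    (0 : E) ∈ K := by
  set r := gauge L v / gauge L (-v)
  have hr : 0 ≤ r := div_nonneg (gauge_nonneg v) hneg.le
  have opposite_mem : r • (-v) ∈ K := (h (gauge_div_smul hneg v)).mpr hv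
  have hcomb := hK hv opposite_mem (a := r / (1 + r)) (b := 1 / (1 + r)) (by positivity)
    (by positivity) (by field_simp; ring)
  convert hcomb using 1
  module

variable [TopologicalSpace E] [ContinuousSMul ℝ E]

theorem setOfPred_gauge_le_eq_smul (hclosed : IsClosed L) (hstar : StarConvex ℝ 0 L)
    (habs : Absorbent ℝ L) {c : ℝ} (hc : 0 < c) : {x | gauge L x ≤ c} = c • L := by
  refine Subset.antisymm (fun x (hx : gauge L x ≤ c) => ?_) fun x => gauge_le_of_mem hc.le
  have smul_mem : Ioo 0 c⁻¹ ⊆ {r : ℝ | r • x ∈ L} := by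
    rintro r ⟨hr0, hrc⟩
    by_contra hr
    refine ((lt_inv_comm₀ hr0 hc).1 hrc).not_ge ((le_gauge_of_notMem hstar (habs x) ?_).trans hx)
    rwa [mem_inv_smul_set_iff₀ hr0.ne']
  have smul_mem_closed : Icc 0 c⁻¹ ⊆ {r : ℝ | r • x ∈ L} := by
    rw [← closure_Ioo (inv_pos.2 hc).ne]
    exact closure_minimal smul_mem (hclosed.preimage (by fun_prop))
  rw [mem_smul_set_iff_inv_smul_mem₀ hc.ne']
  exact smul_mem_closed (right_mem_Icc.2 (inv_pos.2 hc).le)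

variable [IsTopologicalAddGroup E] [T2Space E]

theorem exists_isGreatest_smul_mem (hK : IsCompact K) (hv : v ∈ K) (hv0 : v ≠ 0) :
    ∃ r, 1 ≤ r ∧ IsGreatest {r : ℝ | r • v ∈ K} r := by
  have one_mem : (1 : ℝ) ∈ {r : ℝ | r • v ∈ K} := by simpa using hv
  obtain ⟨r, hr⟩ :=
    ((isClosedEmbedding_smul_left (𝕜 := ℝ) hv0).isCompact_preimage hK).exists_isGreatest
      ⟨1, one_mem⟩
  exact ⟨r, hr.2 one_mem, hr⟩

theorem exists_eq_setOfPred_gauge_le (hcomp : IsCompact K) (hconv : Convex ℝ K)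
    (h0 : (0 : E) ∈ K) (h : FactorsThrough (· ∈ K) (gauge L)) (hv : v ∈ K)
    (hpos : 0 < gauge L v) : ∃ c > 0, K = {x | gauge L x ≤ c} := by
  have hv0 : v ≠ 0 := by
    rintro rfl
    exact hpos.ne' gauge_zero
  obtain ⟨r, hr1, hr, hmax⟩ := exists_isGreatest_smul_mem hcomp hv hv0
  have hr0 : 0 < r := one_pos.trans_le hr1
  have ray_mem_iff {s : ℝ} (hs : 0 ≤ s) : s • v ∈ K ↔ s ≤ r := by
    refine ⟨fun hsK => hmax hsK, fun hsr => ?_⟩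
    have hsub := hconv.smul_mem_of_zero_mem h0 hr
      ⟨div_nonneg hs hr0.le, (div_le_one hr0).2 hsr⟩
    rwa [smul_smul, div_mul_cancel₀ _ hr0.ne'] at hsub
  refine ⟨r * gauge L v, mul_pos hr0 hpos, Set.ext fun x => ?_⟩
  calc x ∈ K ↔ (gauge L x / gauge L v) • v ∈ K := (h (gauge_div_smul hpos x)).symm.to_iff
    _ ↔ gauge L x / gauge L v ≤ r := ray_mem_iff (div_nonneg (gauge_nonneg x) hpos.le)
    _ ↔ gauge L x ≤ r * gauge L v := div_le_iff₀ hpos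

theorem exists_eq_smul_of_mem_factorsThrough_gauge (hcomp : IsCompact K) (hconv : Convex ℝ K)
    (hclosed : IsClosed L) (hstar : StarConvex ℝ 0 L) (habs : Absorbent ℝ L)
    (hbdd : Bornology.IsVonNBounded ℝ L) (h : FactorsThrough (· ∈ K) (gauge L))
    (hv : v ∈ K) (hv0 : v ≠ 0) : ∃ c : ℝ, 0 < c ∧ K = c • L := by
  have h0 : (0 : E) ∈ K := zero_mem_of_mem_factorsThrough_gauge hconv h hv
    ((gauge_pos habs hbdd).2 (neg_ne_zero.2 hv0))
  obtain ⟨c, hc, hKc⟩ :=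
    exists_eq_setOfPred_gauge_le hcomp hconv h0 h hv ((gauge_pos habs hbdd).2 hv0)
  exact ⟨c, hc, hKc.trans (setOfPred_gauge_le_eq_smul hclosed hstar habs hc)⟩

end Gauge

theorem stmt13_general {E : Type*} [AddCommGroup E] [Module ℝ E] [TopologicalSpace E]
    [IsTopologicalAddGroup E] [ContinuousSMul ℝ E] [T2Space E] [Nontrivial E] [MeasurableSpace E]
    [OpensMeasurableSpace E] (ν : Measure E) [ν.IsOpenPosMeasure] [IsFiniteMeasureOnCompacts ν]
    {l : ℝ} (hl0 : 0 ≤ l) (hl1 : l < 1) {K L : Set E} (hcomp : IsCompact K) (hconv : Convex ℝ K)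
    (hne : (interior K).Nonempty) (hclosed : IsClosed L) (hstar : StarConvex ℝ 0 L)
    (habs : Absorbent ℝ L) (hbdd : Bornology.IsVonNBounded ℝ L)
    (h : FactorsThrough (fun t => ν.real (homothetHull K l t)) (gauge L)) :
    ∃ c : ℝ, 0 < c ∧ K = c • L := by
  obtain ⟨x, hx⟩ := hne
  have := Module.punctured_nhds_neBot ℝ E x
  obtain ⟨v, hv, hv0⟩ :=
    (infinite_of_mem_nhds x (mem_interior_iff_mem_nhds.1 hx)).nontrivial.exists_ne 0
  exact exists_eq_smul_of_mem_factorsThrough_gauge hcomp hconv hclosed hstar habs hbdd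
    (mem_factorsThrough_gauge hconv hcomp.isClosed ⟨x, hx⟩ hcomp.measure_ne_top hl0 hl1 h) hv hv0

theorem stmt13 {n : ℕ} (hn : 2 ≤ n) (l : ℝ) (hl0 : 0 ≤ l) (hl1 : l < 1)
    (K L : Set (EuclideanSpace ℝ (Fin n))) (hK : IsConvexBody K) (hL : IsConvexBody L)
    (hK0 : (0 : EuclideanSpace ℝ (Fin n)) ∈ interior K)
    (hL0 : (0 : EuclideanSpace ℝ (Fin n)) ∈ interior L)
    (h : ∃ f : ℝ → ℝ, ∀ t : EuclideanSpace ℝ (Fin n), homChf K l t = f (gauge L t)) :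
    ∃ (x : EuclideanSpace ℝ (Fin n)) (μ : ℝ), 0 < μ ∧ K = x +ᵥ μ • L := by
  obtain ⟨f, hf⟩ := h
  have : NeZero n := ⟨by omega⟩
  obtain ⟨μ, hμ, hKL⟩ := stmt13_general volume hl0 hl1 hK.1 hK.2.1 hK.2.2 hL.1.isClosed
    (hL.2.1.starConvex (interior_subset hL0))
    (absorbent_nhds_zero (mem_interior_iff_mem_nhds.1 hL0)) (hL.1.isVonNBounded ℝ)
    fun s t hst => (hf s).trans ((congrArg f hst).trans (hf t).symm)
  exact ⟨0, μ, hμ, by rw [zero_vadd, hKL]⟩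
end
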